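/- arXiv:2003.10139 — 3 statements merged into one kernel-verified Lean document; each statement's English description precedes it below -/
import Mathlib

section
/- If G is a bipartite graph, H is the subgraph of G induced by a strong clique of G, and M is a matching of H of size m ≥ 4, then the subgraph of G induced by V(M) contains a cycle of length 2m−2 using at least m−2 edges of M. -/
/-- A strong clique of `G`: a set of edges of `G` such that every pair of edges
either shares an endpoint or is joined by an edge of `G`. -/
def IsStrongClique {V : Type*} (G : SimpleGraph V) (S : Set (Sym2 V)) : Prop :=
  S ⊆ G.edgeSet ∧
    ∀ e ∈ S, ∀ f ∈ S, ∃ a b, a ∈ e ∧ b ∈ f ∧ (a = b ∨ G.Adj a b)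

section Tour
variable {α : Type*} {R : α → α → Prop}

theorem ins_aux (htot : ∀ i j, i ≠ j → R i j ∨ R j i) (z d : α) (l : List α) :
    ∀ c, z ∉ l → (c :: (l ++ [d])).IsChain R → R c z → (∃ y ∈ l ++ [d], R z y) →
    ∃ l', l'.Perm (z :: l) ∧ (c :: (l' ++ [d])).IsChain R := by
  induction l with
  | nil =>
    intro c _ _ hcz ⟨y, hy, hzy⟩
    refine ⟨[z], List.Perm.refl _, ?_⟩
    simp at hy; subst hy
    simp [hcz, hzy]
  | cons e t ih =>
    intro c hz hch hcz ⟨y, hy, hzy⟩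
    simp only [List.cons_append, List.isChain_cons_cons] at hch
    by_cases hze : R z e
    · exact ⟨z :: e :: t, List.Perm.refl _, by simp [hcz, hze]; simpa using hch.2⟩
    · have hez : R e z := by
        rcases htot z e (by rintro rfl; simp at hz) with h | h
        · exact absurd h hze
        · exact h
      obtain ⟨l', hp, hl'⟩ := ih e (by simp at hz; tauto) hch.2 hez
        ⟨y, by
          rcases List.mem_cons.1 hy with h | h
          · subst h; exact absurd hzy hze
          · exact h, hzy⟩
      refine ⟨e :: l', ?_, ?_⟩
      · exact (hp.cons e).trans (List.Perm.swap z e t)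
      · simp only [List.cons_append, List.isChain_cons_cons]
        exact ⟨hch.1, hl'⟩

theorem ins_path (htot : ∀ i j, i ≠ j → R i j ∨ R j i) (z : α) (l : List α) :
    ∀ c, z ∉ l → (c :: l).IsChain R → R c z →
    ∃ l', l'.Perm (z :: l) ∧ (c :: l').IsChain R := by
  induction l with
  | nil =>
    intro c _ _ hcz
    exact ⟨[z], List.Perm.refl _, by simp [hcz]⟩
  | cons e t ih =>
    intro c hz hch hcz
    simp only [List.isChain_cons_cons] at hch
    by_cases hze : R z e
    · exact ⟨z :: e :: t, List.Perm.refl _, by simp [hcz, hze]; simpa using hch.2⟩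
    · have hez : R e z := by
        rcases htot z e (by rintro rfl; simp at hz) with h | h
        · exact absurd h hze
        · exact h
      obtain ⟨l', hp, hl'⟩ := ih e (by simp at hz; tauto) hch.2 hez
      refine ⟨e :: l', ?_, ?_⟩
      · exact (hp.cons e).trans (List.Perm.swap z e t)
      · simp only [List.isChain_cons_cons]
        exact ⟨hch.1, hl'⟩

theorem redei [DecidableEq α] (htot : ∀ i j, i ≠ j → R i j ∨ R j i) (s : Finset α) :
    ∃ l : List α, l.Nodup ∧ (∀ x, x ∈ l ↔ x ∈ s) ∧ l.IsChain R := by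
  induction s using Finset.induction_on with
  | empty => exact ⟨[], by simp⟩
  | insert z s hz ih =>
    obtain ⟨l, hn, hm, hc⟩ := ih
    have hzl : z ∉ l := by rwa [hm]
    have key : ∃ l' : List α, l'.Perm (z :: l) ∧ l'.IsChain R := by
      cases l with
      | nil => exact ⟨[z], List.Perm.refl _, by simp⟩
      | cons e t =>
        by_cases hze : R z e
        · exact ⟨z :: e :: t, List.Perm.refl _, by simp only [List.isChain_cons_cons]; exact ⟨hze, hc⟩⟩
        · have hez : R e z := by
            rcases htot z e (by rintro rfl; simp at hzl) with h | h
            · exact absurd h hze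
            · exact h
          obtain ⟨l', hp, hl'⟩ := ins_path htot z t e (by simp at hzl; tauto) hc hez
          exact ⟨e :: l', (hp.cons e).trans (List.Perm.swap z e t), hl'⟩
    obtain ⟨l', hp, hc'⟩ := key
    refine ⟨l', hp.nodup_iff.2 (by simp [hzl, hn]), ?_, hc'⟩
    intro x
    rw [hp.mem_iff]; simp [hm]

theorem rot (c : α) (l : List α) (hn : (c :: l).Nodup) (hc : (c :: (l ++ [c])).IsChain R)
    (y : α) (hy : y ∈ c :: l) :
    ∃ l', (y :: l').Perm (c :: l) ∧ (y :: (l' ++ [y])).IsChain R := by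
  rcases List.mem_cons.1 hy with h | h
  · subst h; exact ⟨l, List.Perm.refl _, hc⟩
  · obtain ⟨s, t, rfl⟩ := List.append_of_mem h
    refine ⟨t ++ c :: s, ?_, ?_⟩
    · have : (y :: (t ++ c :: s)) = (y :: t) ++ (c :: s) := rfl
      rw [this]
      exact List.perm_append_comm
    · have h1 : (c :: (s ++ y :: t ++ [c])) = (c :: s) ++ (y :: (t ++ [c])) := by simp
      rw [h1, List.isChain_split] at hc
      have h2 : (y :: (t ++ c :: s ++ [y])) = (y :: t) ++ (c :: (s ++ [y])) := by simp
      rw [h2, List.isChain_split]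
      exact ⟨by simpa using hc.2, by simpa using hc.1⟩

theorem ext_cyc (htot : ∀ i j, i ≠ j → R i j ∨ R j i)
    (hstr : ∀ X : Set α, X.Nonempty → Xᶜ.Nonempty → ∃ y ∉ X, ∃ x ∈ X, R y x)
    (c : α) (l : List α) (hl : l ≠ []) (hn : (c :: l).Nodup)
    (hc : (c :: (l ++ [c])).IsChain R) (hout : ∃ z, z ∉ c :: l) :
    ∃ c' l', l'.length = l.length + 1 ∧ (c' :: l').Nodup ∧ (c' :: (l' ++ [c'])).IsChain R := by
  by_cases hins : ∃ z, z ∉ c :: l ∧ (∃ y ∈ c :: l, R y z) ∧ (∃ y ∈ c :: l, R z y)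
  · obtain ⟨z, hz, ⟨y, hy, hyz⟩, ⟨w, hw, hzw⟩⟩ := hins
    obtain ⟨l1, hp, hc1⟩ := rot c l hn hc y hy
    have hz1 : z ∉ y :: l1 := fun h => hz (hp.mem_iff.1 h)
    obtain ⟨l2, hp2, hc2⟩ := ins_aux htot z y l1 y (fun h => hz1 (by simp [h])) hc1 hyz
      ⟨w, by have := hp.mem_iff.2 hw; simp at this ⊢; tauto, hzw⟩
    refine ⟨y, l2, ?_, ?_, hc2⟩
    · have h1 := hp.length_eq
      have h2 := hp2.length_eq
      simp at h1 h2; omega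
    · have h3 : (y :: l2).Perm (z :: y :: l1) := (hp2.cons y).trans (List.Perm.swap z y l1)
      rw [h3.nodup_iff]
      exact List.nodup_cons.2 ⟨hz1, hp.nodup_iff.2 hn⟩
  · push Not at hins
    obtain ⟨w0, hw0, x0, hx0, hwx⟩ := hstr {x | x ∈ c :: l} ⟨c, by simp⟩ hout
    obtain ⟨y1, hy1, z1, hz1, hyz1⟩ := hstr {x | x ∉ c :: l} hout ⟨c, by simp⟩
    simp only [Set.mem_ofPred_eq, not_not] at hw0 hx0 hy1 hz1
    obtain ⟨z, hz, w, hw, hzw⟩ := hstr {x | x ∈ c :: l ∨ ∃ y ∈ c :: l, R x y} ⟨c, by simp⟩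
      ⟨z1, by
        simp only [Set.mem_compl_iff, Set.mem_ofPred_eq, not_or, not_exists, not_and]
        exact ⟨hz1, fun y hy => hins z1 hz1 ⟨y1, hy1, hyz1⟩ y hy⟩⟩
    simp only [Set.mem_ofPred_eq, not_or, not_exists, not_and] at hz hw
    have hwC : w ∉ c :: l := fun h => hz.2 w h hzw
    have hw2 : ∃ y ∈ c :: l, R w y := by tauto
    have hwall : ∀ y ∈ c :: l, R w y := by
      intro y hy
      rcases htot w y (by rintro rfl; exact hwC hy) with h | h
      · exact h
      · obtain ⟨y', hy', h'⟩ := hw2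
        exact absurd h' (hins w hwC ⟨y, hy, h⟩ y' hy')
    have hcz : R c z := by
      rcases htot c z (by rintro rfl; simp at hz) with h | h
      · exact h
      · exact absurd h (hz.2 c (by simp))
    have hzw' : z ≠ w := by
      rintro rfl
      obtain ⟨y, hy, h⟩ := hw2
      exact hz.2 y hy h
    cases l with
    | nil => exact absurd rfl hl
    | cons d t =>
      refine ⟨c, z :: w :: t, by simp, ?_, ?_⟩
      · have := hz.1
        simp at hn this hwC ⊢
        grind
      · cases t with
        | nil => simp [hcz, hzw, hwall c (by simp)]
        | cons e t =>
          simp only [List.cons_append, List.isChain_cons_cons] at hc ⊢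
          exact ⟨hcz, hzw, hwall e (by simp), hc.2.2⟩

theorem tour [Fintype α] [DecidableEq α] (htot : ∀ i j, i ≠ j → R i j ∨ R j i)
    (h4 : 4 ≤ Fintype.card α) :
    ∃ (x y : α) (l : List α), l.length + 2 = Fintype.card α ∧ l.Nodup ∧ x ∉ l ∧ y ∉ l ∧
      (x :: (l ++ [y])).IsChain R ∧ (x = y ∨ R x y) := by
  classical
  by_cases hstr : ∀ X : Set α, X.Nonempty → Xᶜ.Nonempty → ∃ y ∉ X, ∃ x ∈ X, R y x
  · have key : ∀ k, k + 4 ≤ Fintype.card α → ∃ c l, l.length = k + 2 ∧ (c :: l).Nodup ∧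
        (c :: (l ++ [c])).IsChain R := by
      have hout : ∀ (c : α) (l : List α), l.length + 2 ≤ Fintype.card α → ∃ z, z ∉ c :: l := by
        intro c l h
        by_contra! hh
        have h1 : (c :: l).toFinset = Finset.univ := by ext x; simpa using hh x
        have h2 := List.toFinset_card_le (c :: l)
        rw [h1, Finset.card_univ] at h2
        simp at h2; omega
      intro k
      induction k with
      | zero =>
        intro _
        have : Nonempty α := Fintype.card_pos_iff.1 (by omega)
        obtain ⟨v⟩ := this
        obtain ⟨u, hu, v', hv', huv⟩ := hstr {v} ⟨v, rfl⟩ (by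
          obtain ⟨z, hz⟩ := hout v [] (by simp; omega)
          exact ⟨z, by simpa using hz⟩)
        simp only [Set.mem_singleton_iff] at hu hv'
        subst hv'
        obtain ⟨y, hy, x, hx, hyx⟩ := hstr {u | u ≠ v' ∧ R u v'} ⟨u, hu, huv⟩ ⟨v', by simp⟩
        simp only [Set.mem_ofPred_eq] at hy hx
        by_cases hyv : y = v'
        · subst hyv
          obtain ⟨c, l, h1, h2, h3⟩ := ext_cyc htot hstr y [x] (by simp)
            (by simpa using fun h => hx.1 h.symm) (by simp [hyx, hx.2]) (hout _ _ (by simp; omega))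
          exact ⟨c, l, by simpa using h1, h2, h3⟩
        · have hyv2 : ¬ R y v' := fun h => hy ⟨hyv, h⟩
          have hvy : R v' y := (htot y v' hyv).resolve_left hyv2
          refine ⟨v', [y, x], rfl, ?_, by simp [hvy, hyx, hx.2]⟩
          have : y ≠ x := by rintro rfl; exact hy hx
          simp
          exact ⟨⟨fun h => hyv h.symm, fun h => hx.1 h.symm⟩, this⟩
      | succ k ih =>
        intro hk
        obtain ⟨c, l, h1, h2, h3⟩ := ih (by omega)
        obtain ⟨c, l, h1', h2, h3⟩ := ext_cyc htot hstr c l (by rintro rfl; simp at h1) h2 h3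
          (hout _ _ (by omega))
        exact ⟨c, l, by omega, h2, h3⟩
    obtain ⟨c, l, h1, h2, h3⟩ := key (Fintype.card α - 4) (by omega)
    rw [List.nodup_cons] at h2
    exact ⟨c, c, l, by omega, h2.2, h2.1, h2.1, h3, Or.inl rfl⟩
  · push Not at hstr
    obtain ⟨X, hX, hXc, hno⟩ := hstr
    have hdom : ∀ x ∈ X, ∀ y ∉ X, R x y := by
      intro x hx y hy
      exact (htot x y (by rintro rfl; exact hy hx)).resolve_right (hno y hy x hx)
    obtain ⟨p, hpn, hpm, hpc⟩ := redei htot (Finset.univ.filter (· ∈ X))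
    obtain ⟨q, hqn, hqm, hqc⟩ := redei htot (Finset.univ.filter (· ∉ X))
    simp only [Finset.mem_filter, Finset.mem_univ, true_and] at hpm hqm
    have hnod : (p ++ q).Nodup := by
      rw [List.nodup_append]
      refine ⟨hpn, hqn, ?_⟩
      rintro a ha b hb rfl
      exact (hqm a).1 hb ((hpm a).1 ha)
    have hlen : (p ++ q).length = Fintype.card α := by
      rw [← List.toFinset_card_of_nodup hnod, ← Finset.card_univ]
      congr 1
      ext x
      simp [hpm, hqm, em]
    have hch : (p ++ q).IsChain R := by
      rw [List.isChain_append]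
      refine ⟨hpc, hqc, ?_⟩
      intro x hx y hy
      exact hdom x ((hpm x).1 (List.mem_of_mem_getLast? hx)) y ((hqm y).1 (List.mem_of_mem_head? hy))
    obtain ⟨x0, hx0⟩ := hX
    obtain ⟨y0, hy0⟩ := hXc
    rcases p with _ | ⟨x, p⟩
    · exact absurd ((hpm x0).2 hx0) (by simp)
    rcases List.eq_nil_or_concat q with rfl | ⟨q, y, rfl⟩
    · exact absurd ((hqm y0).2 hy0) (by simp)
    refine ⟨x, y, p ++ q, ?_, ?_, ?_, ?_, ?_, Or.inr ?_⟩
    · simp at hlen ⊢; omega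
    · simp at hnod ⊢; grind
    · simp at hnod ⊢; grind
    · simp at hnod ⊢; grind
    · simpa using hch
    · exact hdom x ((hpm x).1 (by simp)) y ((hqm y).1 (by simp))

end Tour

theorem walk_aux {V α : Type*} (G : SimpleGraph V) (a b : α → V)
    (hab : ∀ i, G.Adj (a i) (b i)) (y : α) (l : List α) :
    ∀ x, (x :: (l ++ [y])).IsChain (fun i j => G.Adj (a i) (b j)) →
    ∃ P : G.Walk (a x) (b y), P.length = 2 * l.length + 1 ∧
      P.support = a x :: (l.flatMap (fun i => [b i, a i]) ++ [b y]) ∧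
      ∀ i ∈ l, s(a i, b i) ∈ P.edges := by
  induction l with
  | nil =>
    intro x h
    simp at h
    exact ⟨SimpleGraph.Walk.cons h .nil, by simp⟩
  | cons e t ih =>
    intro x h
    simp only [List.cons_append, List.isChain_cons_cons] at h
    obtain ⟨P, h1, h2, h3⟩ := ih e h.2
    refine ⟨SimpleGraph.Walk.cons h.1 (SimpleGraph.Walk.cons (hab e).symm P), ?_, ?_, ?_⟩
    · simp [h1]; ring
    · simp [h2]
    · intro i hi
      rcases List.mem_cons.1 hi with rfl | hi
      · simp [Sym2.eq_swap]
      · simp [h3 i hi]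

theorem closing_edge {V : Type*} (G : SimpleGraph V) {u v : V} (P : G.Walk u v)
    (hpath : P.IsPath) (hP1 : 2 ≤ P.length) : s(v, u) ∉ P.edges := by
  intro h
  cases P with
  | nil => simp at h
  | cons h0 P' =>
    rw [SimpleGraph.Walk.cons_isPath_iff] at hpath
    rw [SimpleGraph.Walk.edges_cons, List.mem_cons] at h
    rcases h with h | h
    · rename_i w
      have hw : w = v := by
        rcases Sym2.eq_iff.1 h with h | h
        · exact absurd (h.1 ▸ P'.end_mem_support) hpath.2
        · exact h.1.symm
      subst hw
      have h0 : P'.length = 0 := by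
        have := SimpleGraph.Walk.isPath_iff_eq_nil.1 hpath.1
        simp [this]
      simp at hP1; omega
    · exact hpath.2 (P'.snd_mem_support_of_mem_edges h)

/-- If `G` is a bipartite graph, `H` is the subgraph of `G` induced by a strong clique
of `G`, and `M` is a matching of `H` of size `m ≥ 4`, then `G[V(M)]` contains a cycle of
length `2m - 2` using at least `m - 2` edges of `M`. -/
theorem stmt1 {V : Type*} [Fintype V] [DecidableEq V] (G : SimpleGraph V)
    (hbip : G.Colorable 2)
    (S : Set (Sym2 V)) (hS : IsStrongClique G S)
    (M : Finset (Sym2 V)) (hMS : ↑M ⊆ S)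
    (hmatch : ∀ e ∈ M, ∀ f ∈ M, e ≠ f → ∀ v : V, v ∈ e → v ∉ f)
    (m : ℕ) (hm : M.card = m) (hm4 : 4 ≤ m) :
    ∃ (u : V) (C : G.Walk u u), C.IsCycle ∧ C.length = 2 * m - 2 ∧
      (∀ v ∈ C.support, ∃ e ∈ M, v ∈ e) ∧
      m - 2 ≤ (M.filter (fun e => e ∈ C.edges)).card := by
  obtain ⟨col⟩ := hbip
  have hcol : ∀ u v, G.Adj u v → col u ≠ col v := fun u v h => col.valid h
  have hends : ∀ e : M, ∃ u v : V, e.1 = s(u, v) ∧ G.Adj u v ∧ col u = 0 ∧ col v = 1 := by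
    rintro ⟨e, he⟩
    have hadj := hS.1 (hMS he)
    induction e using Sym2.ind with
    | _ u v =>
      have hadj : G.Adj u v := hadj
      have hne := hcol u v hadj
      by_cases h0 : col u = 0
      · exact ⟨u, v, rfl, hadj, h0, by omega⟩
      · exact ⟨v, u, Sym2.eq_swap, hadj.symm, by omega, by omega⟩
  choose a b hs hab ha hb using hends
  have hma : ∀ i : M, a i ∈ i.1 := fun i => by rw [hs i]; simp
  have hmb : ∀ i : M, b i ∈ i.1 := fun i => by rw [hs i]; simp
  have hsame : ∀ (i j : M) v, v ∈ i.1 → v ∈ j.1 → i = j := by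
    intro i j v hi hj
    by_contra hne
    exact hmatch i i.2 j j.2 (fun h => hne (Subtype.ext h)) v hi hj
  have ainj : ∀ i j, a i = a j → i = j := fun i j h => hsame i j _ (hma i) (h ▸ hma j)
  have binj : ∀ i j, b i = b j → i = j := fun i j h => hsame i j _ (hmb i) (h ▸ hmb j)
  have habne : ∀ i j, a i ≠ b j := fun i j h => by
    have h1 := ha i; rw [h, hb j] at h1; simp at h1
  have htot : ∀ i j : M, i ≠ j → G.Adj (a i) (b j) ∨ G.Adj (a j) (b i) := by
    intro i j hij
    obtain ⟨u, v, hu, hv, h⟩ := hS.2 i (hMS i.2) j (hMS j.2)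
    rcases h with rfl | h
    · exact absurd (hsame i j _ hu hv) hij
    · have hc := hcol u v h
      rw [hs i, Sym2.mem_iff] at hu
      rw [hs j, Sym2.mem_iff] at hv
      rcases hu with rfl | rfl <;> rcases hv with rfl | rfl
      · exact absurd ((ha i).trans (ha j).symm) hc
      · exact Or.inl h
      · exact Or.inr h.symm
      · exact absurd ((hb i).trans (hb j).symm) hc
  obtain ⟨x, y, l, hlen, hnd, hx, hy, hch, hxy⟩ :=
    tour (R := fun i j : M => G.Adj (a i) (b j)) htot (by simp [hm, hm4])
  have hcard : l.length + 2 = m := by simpa [hm] using hlen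
  have hadj : G.Adj (a x) (b y) := by
    rcases hxy with rfl | h
    · exact hab x
    · exact h
  obtain ⟨P, hP1, hP2, hP3⟩ := walk_aux G a b hab y l x hch
  have hnodl : ∀ l : List M, l.Nodup → (l.flatMap (fun i => [b i, a i])).Nodup := by
    intro l
    induction l with
    | nil => simp
    | cons e t ih =>
      intro h
      rw [List.nodup_cons] at h
      have := ih h.2
      simp only [List.flatMap_cons, List.cons_append, List.nil_append, List.nodup_cons,
        List.mem_cons, List.mem_flatMap, List.not_mem_nil, or_false, not_or, not_exists, not_and]
      refine ⟨⟨fun h => habne _ _ h.symm, ?_⟩, ?_, this⟩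
      · intro i hi
        exact ⟨fun hh => h.1 (binj _ _ hh ▸ hi), fun hh => habne _ _ hh.symm⟩
      · intro i hi
        exact ⟨habne _ _, fun hh => h.1 (ainj _ _ hh ▸ hi)⟩
  have hpath : P.IsPath := by
    rw [SimpleGraph.Walk.isPath_def, hP2, List.nodup_cons, List.nodup_append]
    refine ⟨?_, hnodl l hnd, by simp, ?_⟩
    · simp only [List.mem_append, List.mem_flatMap, List.mem_cons, List.not_mem_nil, or_false,
        not_or, not_exists, not_and]
      exact ⟨fun i hi => ⟨habne _ _, fun hh => hx (ainj _ _ hh ▸ hi)⟩, habne _ _⟩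
    · intro u hu v hv huv
      simp only [List.mem_flatMap, List.mem_cons, List.not_mem_nil, or_false] at hu hv
      subst hv
      obtain ⟨i, hi, h | h⟩ := hu
      · exact hy (binj i y (h.symm.trans huv) ▸ hi)
      · exact habne i y (h.symm.trans huv)
  have hedge : s(b y, a x) ∉ P.edges := by
    exact closing_edge G P hpath (by omega)
  refine ⟨b y, SimpleGraph.Walk.cons hadj.symm P, ?_, ?_, ?_, ?_⟩
  · rw [SimpleGraph.Walk.cons_isCycle_iff]
    exact ⟨hpath, hedge⟩
  · simp [hP1]; omega
  · intro v hv
    simp only [SimpleGraph.Walk.support_cons, hP2, List.mem_append, List.mem_flatMap,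
      List.mem_cons, List.not_mem_nil, or_false] at hv
    rcases hv with rfl | rfl | ⟨i, -, rfl | rfl⟩ | rfl
    · exact ⟨y, y.2, hmb y⟩
    · exact ⟨x, x.2, hma x⟩
    · exact ⟨i, i.2, hmb i⟩
    · exact ⟨i, i.2, hma i⟩
    · exact ⟨y, y.2, hmb y⟩
  · have h1 : (l.map Subtype.val).toFinset.card = l.length := by
      rw [List.toFinset_card_of_nodup (hnd.map Subtype.val_injective)]; simp
    have : m - 2 = (l.map Subtype.val).toFinset.card := by omega
    rw [this]
    apply Finset.card_le_card
    intro e he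
    rw [List.mem_toFinset, List.mem_map] at he
    obtain ⟨i, hi, rfl⟩ := he
    rw [Finset.mem_filter]
    refine ⟨i.2, ?_⟩
    rw [SimpleGraph.Walk.edges_cons]
    have := hP3 i hi
    rw [← hs i] at this
    exact List.mem_cons_of_mem _ this
end

section
/- For every integer k ≥ 2, if G is a C_{2k}-free bipartite graph with maximum degree Δ(G) ≥ 1, then the strong clique number of G is at most kΔ(G) − (k−1). -/
/-- `G` contains no cycle of length `n`. -/
def CycleFree {V : Type*} (G : SimpleGraph V) (n : ℕ) : Prop :=
  ∀ (v : V) (c : G.Walk v v), c.IsCycle → c.length ≠ n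

section bip
open Finset
open scoped Classical

structure BSetup {α β : Type*} [Fintype α] [Fintype β] (E : α → β → Prop)
    (F : Finset (α × β)) (D : ℕ) : Prop where
  sub : ∀ e ∈ F, E e.1 e.2
  strong : ∀ e ∈ F, ∀ f ∈ F, E e.1 f.2 ∨ E f.1 e.2
  dr : ∀ a, (univ.filter (fun b => E a b)).card ≤ D
  dl : ∀ b, (univ.filter (fun a => E a b)).card ≤ D

def HasCyc {α β : Type*} (E : α → β → Prop) (k : ℕ) : Prop :=
  ∃ (p : ℕ → α) (q : ℕ → β), (∀ i < k, ∀ j < k, p i = p j → i = j) ∧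
    (∀ i < k, ∀ j < k, q i = q j → i = j) ∧ (∀ i < k, E (p i) (q i)) ∧
    (∀ i, i + 1 < k → E (p i) (q (i+1))) ∧ E (p (k-1)) (q 0)

variable {α β : Type*}

theorem HasCyc.swap {E : α → β → Prop} {k : ℕ} (h : HasCyc (fun b a => E a b) k) :
    HasCyc E k := by
  obtain ⟨p, q, hp, hq, h1, h2, h3⟩ := h
  refine ⟨fun i => q (k - 1 - i), fun i => p (k - 1 - i), ?_, ?_, ?_, ?_, ?_⟩
  · intro i hi j hj h
    have := hq _ (by omega) _ (by omega) h
    omega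
  · intro i hi j hj h
    have := hp _ (by omega) _ (by omega) h
    omega
  · intro i hi
    exact h1 _ (by omega)
  · intro i hi
    have := h2 (k - 1 - (i+1)) (by omega)
    rwa [show k - 1 - (i+1) + 1 = k - 1 - i by omega] at this
  · simpa using h3

/-- insertion in a sequence -/
def insAt {ι : Type*} (y : ℕ → ι) (v : ι) (j : ℕ) : ℕ → ι :=
  fun i => if i < j then y i else if i = j then v else y (i-1)

def IsPth {ι : Type*} (R : ι → ι → Prop) (T : Finset ι) (n : ℕ) (y : ℕ → ι) : Prop :=
  (∀ i < n, y i ∈ T) ∧ (∀ i < n, ∀ j < n, y i = y j → i = j) ∧ ∀ i, i + 1 < n → R (y i) (y (i+1))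

theorem insAt_path {ι : Type*} {R : ι → ι → Prop} {T : Finset ι} {n : ℕ} {y : ℕ → ι} {v : ι}
    {j : ℕ} (h : IsPth R T n y) (hv : v ∉ T) (hj : j ≤ n)
    (h1 : 0 < j → R (y (j-1)) v) (h2 : j < n → R v (y j)) :
    IsPth R (insert v T) (n+1) (insAt y v j) := by
  obtain ⟨hT, hi, hc⟩ := h
  have hne : ∀ i < n, y i ≠ v := fun i hi h => hv (h ▸ hT i hi)
  refine ⟨?_, ?_, ?_⟩
  · intro i hi
    unfold insAt
    split_ifs with a b
    · exact mem_insert_of_mem (hT _ (by omega))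
    · exact mem_insert_self _ _
    · exact mem_insert_of_mem (hT _ (by omega))
  · intro a ha b hb hab
    unfold insAt at hab
    split_ifs at hab with c d e f g
    · exact hi _ (by omega) _ (by omega) hab
    · exact absurd hab (hne _ (by omega))
    · have := hi _ (by omega) _ (by omega) hab; omega
    · exact absurd hab.symm (hne _ (by omega))
    · omega
    · exact absurd hab.symm (hne _ (by omega))
    · have := hi _ (by omega) _ (by omega) hab; omega
    · exact absurd hab (hne _ (by omega))
    · have := hi _ (by omega) _ (by omega) hab; omega
  · intro i hin
    unfold insAt
    rcases lt_trichotomy (i+1) j with c | c | c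
    · rw [if_pos (by omega), if_pos c]; exact hc _ (by omega)
    · rw [if_pos (by omega), if_neg (by omega), if_pos c]
      have := h1 (by omega)
      rwa [show j - 1 = i by omega] at this
    · rw [if_neg (by omega : ¬ i < j), if_neg (by omega : ¬ (i + 1 < j)),
        if_neg (by omega : ¬ i + 1 = j)]
      by_cases d : i = j
      · rw [if_pos d]; subst d; exact h2 (by omega)
      · rw [if_neg d]
        have := hc (i-1) (by omega)
        rwa [show i - 1 + 1 = i + 1 - 1 by omega] at this

/-- either an inner insertion place, or upward closed -/
theorem ins_dich {ι : Type*} {R : ι → ι → Prop} {n : ℕ} {y : ℕ → ι} {v : ι}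
    (ht : ∀ i < n, R (y i) v ∨ R v (y i)) :
    (∃ j, j + 1 < n ∧ R (y j) v ∧ R v (y (j+1))) ∨
    ∀ i j, i ≤ j → j < n → R (y i) v → R (y j) v := by
  by_cases h : ∃ j, j + 1 < n ∧ R (y j) v ∧ R v (y (j+1))
  · exact Or.inl h
  · right
    intro i j hij
    induction j, hij using Nat.le_induction with
    | base => intro _ h; exact h
    | succ m hm ih =>
      intro hmn hR
      have := ih (by omega) hR
      rcases ht (m+1) hmn with h' | h'
      · exact h'
      · exact absurd ⟨m, hmn, this, h'⟩ h

theorem exists_path {ι : Type*} {R : ι → ι → Prop} (T : Finset ι)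
    (ht : ∀ x ∈ T, ∀ y ∈ T, R x y ∨ R y x) (d : ι) : ∃ y, IsPth R T T.card y := by
  induction T using Finset.induction_on with
  | empty => exact ⟨fun _ => d, by simp [IsPth]⟩
  | insert v T hv ih =>
    obtain ⟨y, hy⟩ := ih (fun x hx y hy => ht x (mem_insert_of_mem hx) y (mem_insert_of_mem hy))
    rw [card_insert_of_notMem hv]
    have hvt : ∀ i < T.card, R (y i) v ∨ R v (y i) := fun i hi =>
      ht _ (mem_insert_of_mem (hy.1 i hi)) _ (mem_insert_self _ _)
    by_cases h0 : T.card = 0 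
    · exact ⟨insAt y v 0, insAt_path hy hv (by omega) (by omega) (by omega)⟩
    rcases ins_dich hvt with ⟨j, hj, h1, h2⟩ | h
    · exact ⟨insAt y v (j+1), insAt_path hy hv (by omega) (fun _ => by simpa using h1) (fun _ => h2)⟩
    · rcases hvt 0 (by omega) with h' | h'
      · exact ⟨insAt y v T.card, insAt_path hy hv le_rfl
          (fun _ => h 0 _ (by omega) (by omega) h') (by omega)⟩
      · exact ⟨insAt y v 0, insAt_path hy hv (by omega) (by omega) (fun _ => h')⟩

theorem moon {ι : Type*} {R : ι → ι → Prop} (T : Finset ι) (k : ℕ) (hk : 3 ≤ k)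
    (hT : T.card = k + 1) (ht : ∀ x ∈ T, ∀ y ∈ T, R x y ∨ R y x) :
    (∃ y, IsPth R T k y ∧ R (y (k-1)) (y 0)) ∨ (∃ y, IsPth R T (k+1) y ∧ R (y 0) (y k)) := by
  obtain ⟨v, hv⟩ : T.Nonempty := card_pos.1 (by omega)
  have hT' : (T.erase v).card = k := by rw [card_erase_of_mem hv]; omega
  obtain ⟨y, hy⟩ := exists_path (T.erase v)
    (fun x hx y hy => ht x (mem_of_mem_erase hx) y (mem_of_mem_erase hy)) v
  rw [hT'] at hy
  have mono : ∀ {n z}, IsPth R (T.erase v) n z → IsPth R T n z := fun h =>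
    ⟨fun i hi => mem_of_mem_erase (h.1 i hi), h.2⟩
  have hvt : ∀ i < k, R (y i) v ∨ R v (y i) := fun i hi =>
    ht _ (mem_of_mem_erase (hy.1 i hi)) _ hv
  have hnv : v ∉ T.erase v := by simp
  have hins : insert v (T.erase v) = T := insert_erase hv
  rcases ht _ (mem_of_mem_erase (hy.1 (k-1) (by omega))) _ (mem_of_mem_erase (hy.1 0 (by omega)))
    with h | hch
  · exact Or.inl ⟨y, mono hy, h⟩
  rcases ins_dich hvt with ⟨j, hj, h1, h2⟩ | hup
  · right
    refine ⟨insAt y v (j+1), hins ▸ insAt_path hy hnv (by omega) (fun _ => by simpa using h1)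
      (fun _ => h2), ?_⟩
    unfold insAt
    rw [if_pos (by omega), if_neg (by omega), if_neg (by omega)]; exact hch
  rcases hvt 0 (by omega) with h0 | h0
  · right
    refine ⟨insAt y v k, hins ▸ insAt_path hy hnv le_rfl
          (fun _ => hup 0 _ (by omega) (by omega) h0) (by omega), ?_⟩
    unfold insAt
    rw [if_pos (by omega), if_neg (by omega), if_pos rfl]; exact h0
  rcases hvt (k-1) (by omega) with hl | hl
  swap
  · right
    refine ⟨insAt y v 0, hins ▸ insAt_path hy hnv (by omega) (by omega) (fun _ => h0), ?_⟩
    unfold insAt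
    rw [if_neg (by omega), if_pos rfl, if_neg (by omega), if_neg (by omega)]; exact hl
  left
  rcases hvt 1 (by omega) with h1 | h1
  · -- v, y0, ..., y_{k-2}
    have hy' : IsPth R (T.erase v) (k-1) y := ⟨fun i hi => hy.1 i (by omega),
      fun i hi j hj => hy.2.1 i (by omega) j (by omega), fun i hi => hy.2.2 i (by omega)⟩
    have := insAt_path (j := 0) hy' hnv (by omega) (by omega) (fun _ => h0)
    rw [hins, show k - 1 + 1 = k by omega] at this
    refine ⟨_, this, ?_⟩
    unfold insAt
    rw [if_neg (by omega), if_neg (by omega), if_neg (by omega), if_pos rfl]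
    exact hup 1 _ (by omega) (by omega) h1
  · have hy' : IsPth R (T.erase v) (k-1) (fun i => y (i+1)) := ⟨fun i hi => hy.1 _ (by omega),
      fun i hi j hj h => by have := hy.2.1 _ (by omega) _ (by omega) h; omega,
      fun i hi => hy.2.2 _ (by omega)⟩
    have := insAt_path (j := 0) hy' hnv (by omega) (by omega) (fun _ => h1)
    rw [hins, show k - 1 + 1 = k by omega] at this
    refine ⟨_, this, ?_⟩
    unfold insAt
    rw [if_neg (by omega), if_neg (by omega), if_neg (by omega), if_pos rfl]
    dsimp only
    rw [show k - 1 - 1 + 1 = k - 1 by omega]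
    exact hl

/-- A matching of size `k+1` in a strong clique gives a cycle. -/
theorem matching_cyc {E : α → β → Prop} (T : Finset (α × β)) (k : ℕ) (hk : 3 ≤ k)
    (hT : T.card = k + 1) (hs : ∀ e ∈ T, E e.1 e.2)
    (ht : ∀ x ∈ T, ∀ y ∈ T, E x.1 y.2 ∨ E y.1 x.2)
    (h1 : ∀ x ∈ T, ∀ y ∈ T, x.1 = y.1 → x = y) (h2 : ∀ x ∈ T, ∀ y ∈ T, x.2 = y.2 → x = y) :
    HasCyc E k := by
  rcases moon (R := fun x y : α × β => E x.1 y.2) T k hk hT ht with ⟨y, hy, hc⟩ | ⟨y, hy, hc⟩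
  · refine ⟨fun i => (y i).1, fun i => (y i).2, ?_, ?_, ?_, ?_, hc⟩
    · exact fun i hi j hj h => hy.2.1 i hi j hj (h1 _ (hy.1 i hi) _ (hy.1 j hj) h)
    · exact fun i hi j hj h => hy.2.1 i hi j hj (h2 _ (hy.1 i hi) _ (hy.1 j hj) h)
    · exact fun i hi => hs _ (hy.1 i hi)
    · exact fun i hi => hy.2.2 i hi
  · have i1 : ∀ i < k + 1, ∀ j < k + 1, (y i).1 = (y j).1 → i = j :=
      fun i hi j hj h => hy.2.1 i hi j hj (h1 _ (hy.1 i hi) _ (hy.1 j hj) h)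
    have i2 : ∀ i < k + 1, ∀ j < k + 1, (y i).2 = (y j).2 → i = j :=
      fun i hi j hj h => hy.2.1 i hi j hj (h2 _ (hy.1 i hi) _ (hy.1 j hj) h)
    refine ⟨fun i => if i + 1 < k then (y (i+1)).1 else (y 0).1, fun i => (y (i+1)).2,
      ?_, ?_, ?_, ?_, ?_⟩
    · intro i hi j hj h
      dsimp only at h
      split_ifs at h
      all_goals first | (have := i1 _ (by omega) _ (by omega) h; omega)
    · intro i hi j hj h
      have := i2 _ (by omega) _ (by omega) h
      omega
    · intro i hi
      dsimp only
      split_ifs with c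
      · exact hs _ (hy.1 _ (by omega))
      · rwa [show i + 1 = k by omega]
    · intro i hi
      dsimp only
      rw [if_pos hi]
      exact hy.2.2 (i+1) (by omega)
    · dsimp only
      rw [if_neg (by omega)]
      exact hy.2.2 0 (by omega)

/-- Nearly complete bipartite graphs contain long cycles. -/
theorem near_complete {E : α → β → Prop} : ∀ (k : ℕ), 1 ≤ k → ∀ (R : Finset α) (X : Finset β),
    R.card = k → k ≤ X.card → ((R ×ˢ X).filter (fun e => ¬ E e.1 e.2)).card ≤ k - 2 →
    ∃ (p : ℕ → α) (q : ℕ → β), (∀ i < k, ∀ j < k, p i = p j → i = j) ∧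
    (∀ i < k, ∀ j < k, q i = q j → i = j) ∧ (∀ i < k, E (p i) (q i)) ∧
    (∀ i, i + 1 < k → E (p i) (q (i+1))) ∧ E (p (k-1)) (q 0) ∧
    (∀ i < k, p i ∈ R) ∧ (∀ i < k, q i ∈ X) := by
  intro k hk
  induction k, hk using Nat.le_induction with
  | base =>
    intro R X hR hX hm
    obtain ⟨r, hr⟩ : R.Nonempty := card_pos.1 (by omega)
    obtain ⟨x, hx⟩ : X.Nonempty := card_pos.1 (by omega)
    have hE : E r x := by
      by_contra h
      have : (r, x) ∈ ((R ×ˢ X).filter (fun e => ¬ E e.1 e.2)) := by simp [hr, hx, h]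
      have := card_pos.2 ⟨_, this⟩
      omega
    exact ⟨fun _ => r, fun _ => x, by omega, by omega, fun _ _ => hE, fun _ _ => hE, hE,
      fun _ _ => hr, fun _ _ => hx⟩
  | succ m hm ih =>
    intro R X hR hX hmiss
    set M := ((R ×ˢ X).filter (fun e => ¬ E e.1 e.2)) with hM
    have memM : ∀ a b, (a, b) ∈ M ↔ (a ∈ R ∧ b ∈ X) ∧ ¬ E a b := by
      intro a b; simp [hM]
    obtain ⟨r, hr, hrm⟩ : ∃ r ∈ R, M = ∅ ∨ ∃ b, (r, b) ∈ M := by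
      rcases M.eq_empty_or_nonempty with h | ⟨⟨a, b⟩, h⟩
      · obtain ⟨r, hr⟩ : R.Nonempty := card_pos.1 (by omega)
        exact ⟨r, hr, Or.inl h⟩
      · exact ⟨a, ((memM a b).1 h).1.1, Or.inr ⟨b, h⟩⟩
    obtain ⟨z, hz, hrz⟩ : ∃ z ∈ X, E r z := by
      by_contra! h
      have : X.card ≤ M.card := card_le_card_of_injOn (fun b => (r, b))
        (fun b hb => (memM r b).2 ⟨⟨hr, hb⟩, h b hb⟩) (fun a _ b _ h => by simpa using h)
      omega
    obtain ⟨p, q, hp, hq, h1, h2, h3, hpR, hqX⟩ := ih (R.erase r) (X.erase z)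
      (by rw [card_erase_of_mem hr]; omega) (by rw [card_erase_of_mem hz]; omega) (by
        have hs : (((R.erase r) ×ˢ (X.erase z)).filter (fun e => ¬ E e.1 e.2)) ⊆ M := by
          rintro ⟨a, b⟩ h
          simp only [mem_filter, mem_product, mem_erase] at h
          exact (memM a b).2 ⟨⟨h.1.1.2, h.1.2.2⟩, h.2⟩
        rcases hrm with h | ⟨b, hb⟩
        · rw [h] at hs
          rw [subset_empty.1 hs]; simp
        · have : (((R.erase r) ×ˢ (X.erase z)).filter (fun e => ¬ E e.1 e.2)).card < M.card := by
            apply card_lt_card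
            refine ⟨hs, fun h => ?_⟩
            have := h hb
            simp at this
          omega)
    have hpr : ∀ i < m, p i ≠ r := fun i hi => ne_of_mem_erase (hpR i hi)
    have hqz : ∀ i < m, q i ≠ z := fun i hi => ne_of_mem_erase (hqX i hi)
    have hpR' : ∀ i < m, p i ∈ R := fun i hi => mem_of_mem_erase (hpR i hi)
    have hqX' : ∀ i < m, q i ∈ X := fun i hi => mem_of_mem_erase (hqX i hi)
    -- find place
    obtain ⟨c, hc, hc1, hc2⟩ : ∃ c < m, E (p c) z ∧ E r (q (if c + 1 < m then c + 1 else 0)) := by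
      by_contra! h
      have : (range m).card ≤ M.card := card_le_card_of_injOn
        (fun i => if E (p i) z then (r, q (if i + 1 < m then i + 1 else 0)) else (p i, z)) (by
          intro i hi
          have hi : i < m := by simpa using hi
          dsimp only
          split_ifs with a b b
          · exact (memM _ _).2 ⟨⟨hr, hqX' _ b⟩, by simpa [b] using h i hi a⟩
          · exact (memM _ _).2 ⟨⟨hr, hqX' _ (by omega)⟩, by simpa [b] using h i hi a⟩
          all_goals exact (memM _ _).2 ⟨⟨hpR' _ hi, hz⟩, a⟩) (by
          intro i hi j hj hij
          have hi : i < m := by simpa using hi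
          have hj : j < m := by simpa using hj
          dsimp only at hij
          split_ifs at hij
          all_goals rw [Prod.mk.injEq] at hij
          all_goals first
            | exact absurd hij.1 (hpr _ hi)
            | exact absurd hij.1.symm (hpr _ hj)
            | exact hp _ hi _ hj hij.1
            | (have := hq _ (by omega) _ (by omega) hij.2; omega))
      simp at this
      omega
    let s : ℕ → ℕ := fun j => if j + (c + 1) < m then j + (c+1) else j + (c+1) - m
    have hs : ∀ j < m, s j < m := by intro j hj; simp only [s]; split_ifs <;> omega
    have hsi : ∀ i < m, ∀ j < m, s i = s j → i = j := by
      intro i hi j hj; simp only [s]; split_ifs <;> omega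
    refine ⟨fun j => if j < m then p (s j) else r, fun j => if j < m then q (s j) else z,
      ?_, ?_, ?_, ?_, ?_, ?_, ?_⟩
    · intro i hi j hj h
      dsimp only at h
      split_ifs at h with a b b
      · exact hsi _ a _ b (hp _ (hs _ a) _ (hs _ b) h)
      · exact absurd h (hpr _ (hs _ a))
      · exact absurd h.symm (hpr _ (hs _ b))
      · omega
    · intro i hi j hj h
      dsimp only at h
      split_ifs at h with a b b
      · exact hsi _ a _ b (hq _ (hs _ a) _ (hs _ b) h)
      · exact absurd h (hqz _ (hs _ a))
      · exact absurd h.symm (hqz _ (hs _ b))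
      · omega
    · intro i hi
      dsimp only
      split_ifs with a
      · exact h1 _ (hs _ a)
      · exact hrz
    · intro i hi
      dsimp only
      rw [if_pos (by omega)]
      split_ifs with a
      · by_cases b : s i + 1 < m
        · have := h2 _ b
          rwa [show s (i+1) = s i + 1 by simp only [s] at b ⊢; split_ifs at b ⊢ <;> omega]
        · have e1 : s i = m - 1 := by have := hs i (by omega); omega
          have e2 : s (i+1) = 0 := by
            simp only [s] at e1 ⊢; split_ifs at e1 ⊢ <;> omega
          rw [e1, e2]; exact h3
      · have : s i = c := by simp only [s]; split_ifs <;> omega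
        rwa [this]
    · dsimp only
      rw [if_neg (by omega), if_pos (by omega)]
      have : s 0 = if c + 1 < m then c + 1 else 0 := by simp only [s]; split_ifs <;> omega
      rwa [this]
    · intro i hi
      dsimp only
      split_ifs with a
      · exact hpR' _ (hs _ a)
      · exact hr
    · intro i hi
      dsimp only
      split_ifs with a
      · exact hqX' _ (hs _ a)
      · exact hz

noncomputable def NF [Fintype β] (F : Finset (α × β)) (a : α) : Finset β :=
  univ.filter (fun b => (a, b) ∈ F)

noncomputable def MF [Fintype α] (F : Finset (α × β)) (b : β) : Finset α :=
  univ.filter (fun a => (a, b) ∈ F)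

theorem card_rows [Fintype β] (F : Finset (α × β)) (C : Finset α) :
    (F.filter (fun e => e.1 ∈ C)).card = ∑ a ∈ C, (NF F a).card := by
  rw [card_eq_sum_card_fiberwise (f := Prod.fst) (t := C) (fun e he => by simp at he; exact he.2)]
  refine sum_congr rfl fun a ha => ?_
  refine card_bij' (fun e _ => e.2) (fun b _ => (a, b)) ?_ ?_ ?_ ?_
  · rintro ⟨x, y⟩ h
    simp only [mem_filter] at h
    obtain ⟨⟨h1, h2⟩, rfl⟩ := h
    simp [NF, h1]
  · intro b hb
    simp only [NF, mem_filter, mem_univ, true_and] at hb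
    simp [hb, ha]
  · rintro ⟨x, y⟩ h
    simp only [mem_filter] at h
    obtain ⟨⟨h1, h2⟩, rfl⟩ := h
    rfl
  · intros; rfl

theorem card_cols [Fintype α] (F : Finset (α × β)) (C : Finset β) :
    (F.filter (fun e => e.2 ∈ C)).card = ∑ b ∈ C, (MF F b).card := by
  rw [card_eq_sum_card_fiberwise (f := Prod.snd) (t := C) (fun e he => by simp at he; exact he.2)]
  refine sum_congr rfl fun a ha => ?_
  refine card_bij' (fun e _ => e.1) (fun b _ => (b, a)) ?_ ?_ ?_ ?_
  · rintro ⟨x, y⟩ h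
    simp only [mem_filter] at h
    obtain ⟨⟨h1, h2⟩, rfl⟩ := h
    simp [MF, h1]
  · intro b hb
    simp only [MF, mem_filter, mem_univ, true_and] at hb
    simp [hb, ha]
  · rintro ⟨x, y⟩ h
    simp only [mem_filter] at h
    obtain ⟨⟨h1, h2⟩, rfl⟩ := h
    rfl
  · intros; rfl

noncomputable def swF (F : Finset (α × β)) : Finset (β × α) := F.image Prod.swap

theorem mem_swF (F : Finset (α × β)) (a : α) (b : β) : (b, a) ∈ swF F ↔ (a, b) ∈ F := by
  simp [swF]

theorem card_swF (F : Finset (α × β)) : (swF F).card = F.card :=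
  card_image_of_injective _ Prod.swap_injective

variable [Fintype α] [Fintype β]

theorem NF_swF (F : Finset (α × β)) (b : β) : NF (swF F) b = MF F b := by
  ext a; simp [NF, MF, mem_swF]

theorem MF_swF (F : Finset (α × β)) (a : α) : MF (swF F) a = NF F a := by
  ext b; simp [NF, MF, mem_swF]

theorem BSetup.swap {E : α → β → Prop} {F : Finset (α × β)} {D : ℕ} (h : BSetup E F D) :
    BSetup (fun b a => E a b) (swF F) D where
  sub := by
    rintro ⟨b, a⟩ he
    exact h.sub _ ((mem_swF F a b).1 he)
  strong := by
    rintro ⟨b, a⟩ he ⟨b', a'⟩ hf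
    have := h.strong _ ((mem_swF F a b).1 he) _ ((mem_swF F a' b').1 hf)
    exact this.symm
  dr := h.dl
  dl := h.dr

theorem BSetup.NF_sub {E : α → β → Prop} {F : Finset (α × β)} {D : ℕ} (h : BSetup E F D) (a : α) :
    NF F a ⊆ univ.filter (fun b => E a b) := by
  intro b hb
  simp only [NF, mem_filter, mem_univ, true_and] at hb ⊢
  exact h.sub _ hb

theorem BSetup.NF_le {E : α → β → Prop} {F : Finset (α × β)} {D : ℕ} (h : BSetup E F D) (a : α) :
    (NF F a).card ≤ D := (card_le_card (h.NF_sub a)).trans (h.dr a)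

theorem BSetup.MF_le {E : α → β → Prop} {F : Finset (α × β)} {D : ℕ} (h : BSetup E F D) (b : β) :
    (MF F b).card ≤ D := by
  rw [← NF_swF]; exact h.swap.NF_le b

theorem BSetup.sq_aux {E : α → β → Prop} {F : Finset (α × β)} {D : ℕ} (h : BSetup E F D)
    (a : α) (ha : 1 ≤ (NF F a).card) (hb : ∀ b, (MF F b).card ≤ (NF F a).card) :
    F.card ≤ D * D := by
  set s := (NF F a).card with hs
  have hsD : s ≤ D := h.NF_le a
  have e1 : (F.filter (fun e => E a e.2)).card ≤ D * s := by
    have : F.filter (fun e => E a e.2) =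
        F.filter (fun e => e.2 ∈ univ.filter (fun b => E a b)) := by simp
    rw [this, card_cols]
    refine (sum_le_card_nsmul _ _ s (fun b _ => hb b)).trans ?_
    exact Nat.mul_le_mul_right _ (h.dr a)
  have e2 : (F.filter (fun e => ¬ E a e.2)).card ≤ (D - 1) * (D - s) := by
    obtain ⟨b1, hb1⟩ := card_pos.1 ha
    have hadj : ∀ e ∈ F, ¬ E a e.2 → ∀ b ∈ NF F a, E e.1 b := by
      intro e he hne b hb
      have hb' : (a, b) ∈ F := by simpa [NF] using hb
      exact (h.strong _ he _ hb').resolve_right hne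
    set F2 := F.filter (fun e => ¬ E a e.2) with hF2
    set A := (univ.filter (fun x => E x b1)).erase a with hA
    have hAc : A.card ≤ D - 1 := by
      rw [hA, card_erase_of_mem]
      · have := h.dl b1; omega
      · have hb' : (a, b1) ∈ F := by simpa [NF] using hb1
        simpa using h.sub _ hb'
    have : F2 = F2.filter (fun e => e.1 ∈ A) := by
      symm
      rw [filter_eq_self]
      intro e he
      rw [hF2, mem_filter] at he
      rw [hA, mem_erase]
      refine ⟨?_, by simpa using hadj e he.1 he.2 b1 hb1⟩
      rintro rfl
      exact he.2 (h.sub _ he.1)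
    rw [this, card_rows]
    refine (sum_le_card_nsmul _ _ (D - s) (fun x _ => ?_)).trans
      (Nat.mul_le_mul_right _ hAc)
    rcases (NF F2 x).eq_empty_or_nonempty with h0 | ⟨y, hy⟩
    · rw [h0]; simp
    · have hy' : (x, y) ∈ F2 := by simpa [NF] using hy
      rw [hF2, mem_filter] at hy'
      have hsub : NF F a ⊆ univ.filter (fun b => E x b) := by
        intro b hb
        simpa using hadj _ hy'.1 hy'.2 b hb
      have : NF F2 x ⊆ univ.filter (fun b => E x b) \ NF F a := by
        intro b hb
        have hb' : (x, b) ∈ F2 := by simpa [NF] using hb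
        rw [hF2, mem_filter] at hb'
        rw [mem_sdiff]
        refine ⟨by simpa using h.sub _ hb'.1, fun hc => hb'.2 ?_⟩
        simpa using h.NF_sub a hc
      refine (card_le_card this).trans ?_
      rw [card_sdiff_of_subset hsub]
      have := h.dr x
      omega
  have e3 := card_filter_add_card_filter_not (s := F) (fun e => E a e.2)
  obtain ⟨t, rfl⟩ := Nat.exists_eq_add_of_le hsD
  have : (s + t - 1) * (s + t - s) ≤ (s + t) * t := by
    rw [Nat.add_sub_cancel_left]
    exact Nat.mul_le_mul_right _ (by omega)
  nlinarith

theorem BSetup.sq {E : α → β → Prop} {F : Finset (α × β)} {D : ℕ} (h : BSetup E F D) :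
    F.card ≤ D * D := by
  rcases F.eq_empty_or_nonempty with rfl | ⟨⟨a0, b0⟩, h0⟩
  · simp
  obtain ⟨a, -, ha⟩ := exists_max_image (univ : Finset α) (fun a => (NF F a).card) ⟨a0, mem_univ _⟩
  obtain ⟨b, -, hb⟩ := exists_max_image (univ : Finset β) (fun a => (MF F a).card) ⟨b0, mem_univ _⟩
  have h1 : 1 ≤ (NF F a0).card := card_pos.2 ⟨b0, by simpa [NF] using h0⟩
  have h2 := ha a0 (mem_univ _)
  rcases le_total (MF F b).card (NF F a).card with hh | hh
  · exact h.sq_aux a (by omega) (fun x => (hb x (mem_univ _)).trans hh)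
  · rw [← card_swF]
    refine h.swap.sq_aux b (by rw [NF_swF]; omega) (fun x => ?_)
    rw [NF_swF, MF_swF]
    exact (ha x (mem_univ _)).trans hh

theorem BSetup.full {E : α → β → Prop} {F : Finset (α × β)} {D : ℕ} (h : BSetup E F D)
    {a : α} (ha : (NF F a).card = D) {e : α × β} (he : e ∈ F) : (a, e.2) ∈ F := by
  have hX : NF F a = univ.filter (fun b => E a b) :=
    eq_of_subset_of_card_le (h.NF_sub a) (by rw [ha]; exact h.dr a)
  by_contra hne
  have hnE : ¬ E a e.2 := by
    intro hE
    have : e.2 ∈ NF F a := by rw [hX]; simpa using hE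
    exact hne (by simpa [NF] using this)
  have hsub : NF F a ⊆ univ.filter (fun b => E e.1 b) := by
    intro b hb
    have hb' : (a, b) ∈ F := by simpa [NF] using hb
    simpa using (h.strong _ he _ hb').resolve_right hnE
  have := eq_of_subset_of_card_le hsub (by rw [ha]; exact h.dr _)
  have h2 : e.2 ∈ NF F a := by rw [this]; simpa using h.sub _ he
  exact hne (by simpa [NF] using h2)

theorem BSetup.full' {E : α → β → Prop} {F : Finset (α × β)} {D : ℕ} (h : BSetup E F D)
    {b : β} (hb : (MF F b).card = D) {e : α × β} (he : e ∈ F) : (e.1, b) ∈ F := by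
  have := h.swap.full (a := b) (by rwa [NF_swF]) (e := (e.2, e.1)) ((mem_swF F e.1 e.2).2 he)
  exact (mem_swF F e.1 b).1 this

theorem BSetup.sumA {E : α → β → Prop} {F : Finset (α × β)} {D : ℕ} (h : BSetup E F D)
    (C : Finset α) :
    ∑ a ∈ C, (NF F a).card + C.card ≤ C.card * D + (C.filter (fun a => (NF F a).card = D)).card := by
  have h1 : (C.filter (fun a => (NF F a).card = D)).card =
    ∑ a ∈ C, if (NF F a).card = D then 1 else 0 := by rw [card_filter]
  rw [h1, card_eq_sum_ones, sum_mul, ← sum_add_distrib, ← sum_add_distrib]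
  refine sum_le_sum fun a _ => ?_
  have := h.NF_le a
  split_ifs <;> omega

theorem BSetup.sumB {E : α → β → Prop} {F : Finset (α × β)} {D : ℕ} (h : BSetup E F D)
    (C : Finset β) :
    ∑ a ∈ C, (MF F a).card + C.card ≤ C.card * D + (C.filter (fun a => (MF F a).card = D)).card := by
  have := h.swap.sumA C
  simpa only [NF_swF] using this

theorem BSetup.one_sided {E : α → β → Prop} {F : Finset (α × β)} {D k : ℕ} (h : BSetup E F D)
    (hk : 1 ≤ k) (hkD : k ≤ D) (hc : ¬ HasCyc E k) (C : Finset α) (hC : C.card = k)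
    (hcov : ∀ e ∈ F, e.1 ∈ C) : F.card + (k - 1) ≤ k * D := by
  by_contra! hlt
  have hF : F.card = ∑ a ∈ C, (NF F a).card := by
    rw [← card_rows, filter_true_of_mem hcov]
  have hs := h.sumA C
  rw [hC, ← hF] at hs
  obtain ⟨a, ha⟩ : (C.filter (fun a => (NF F a).card = D)).Nonempty := card_pos.1 (by omega)
  rw [mem_filter] at ha
  apply hc
  have hFs : F ⊆ C ×ˢ NF F a := by
    intro e he
    rw [mem_product]
    exact ⟨hcov e he, by simpa [NF] using h.full ha.2 he⟩
  have hm : ((C ×ˢ NF F a).filter (fun e => ¬ E e.1 e.2)).card ≤ k - 2 := by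
    have : ((C ×ˢ NF F a).filter (fun e => ¬ E e.1 e.2)) ⊆ (C ×ˢ NF F a) \ F := by
      intro e he
      rw [mem_filter] at he
      rw [mem_sdiff]
      exact ⟨he.1, fun hh => he.2 (h.sub _ hh)⟩
    have := card_le_card this
    rw [card_sdiff_of_subset hFs, card_product, hC, ha.2] at this
    omega
  obtain ⟨p, q, h1, h2, h3, h4, h5, -⟩ := near_complete k hk C (NF F a) hC (by omega) hm
  exact ⟨p, q, h1, h2, h3, h4, h5⟩

theorem BSetup.mixed {E : α → β → Prop} {F : Finset (α × β)} {D : ℕ} (h : BSetup E F D)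
    (A : Finset α) (B : Finset β) (hA : 1 ≤ A.card) (hB : 1 ≤ B.card)
    (hcov : ∀ e ∈ F, e.1 ∈ A ∨ e.2 ∈ B)
    (eA : ∀ a ∈ A, ∃ b, (a, b) ∈ F) (eB : ∀ b ∈ B, ∃ a, (a, b) ∈ F) :
    F.card + (A.card + B.card - 1) ≤ (A.card + B.card) * D := by
  have hs1 := h.sumA A
  have hs2 := h.sumB B
  rw [← card_rows] at hs1
  rw [← card_cols] at hs2
  set A0 := A.filter (fun a => (NF F a).card = D) with hA0
  set B0 := B.filter (fun a => (MF F a).card = D) with hB0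
  set FA := F.filter (fun e => e.1 ∈ A)
  set FB := F.filter (fun e => e.2 ∈ B)
  have hu := card_union_add_card_inter FA FB
  have hFu : FA ∪ FB = F := by
    rw [← filter_or, filter_true_of_mem hcov]
  rw [hFu] at hu
  have hI : (A0 ×ˢ B) ∪ (A ×ˢ B0) ⊆ FA ∩ FB := by
    rintro ⟨a, b⟩ hab
    have key : (a, b) ∈ F ∧ a ∈ A ∧ b ∈ B := by
      rw [mem_union, mem_product, mem_product, hA0, hB0, mem_filter, mem_filter] at hab
      rcases hab with ⟨⟨h1, h2⟩, h3⟩ | ⟨h1, h2, h3⟩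
      · obtain ⟨x, hx⟩ := eB _ h3
        exact ⟨h.full h2 hx, h1, h3⟩
      · obtain ⟨x, hx⟩ := eA _ h1
        exact ⟨h.full' h3 hx, h1, h2⟩
    simp [FA, FB, key]
  have hI1 := card_le_card hI
  have hI2 := card_union_add_card_inter (A0 ×ˢ B) (A ×ˢ B0)
  have hI3 : ((A0 ×ˢ B) ∩ (A ×ˢ B0)).card ≤ A0.card * B0.card := by
    rw [← card_product]
    apply card_le_card
    rintro ⟨a, b⟩ hab
    simp only [mem_inter, mem_product] at hab ⊢
    tauto
  rw [card_product, card_product] at hI2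
  have hp : A0.card ≤ A.card := card_filter_le _ _
  have hq : B0.card ≤ B.card := card_filter_le _ _
  have main : A0.card + B0.card ≤ (FA ∩ FB).card + 1 := by
    generalize A0.card = p0 at *
    generalize B0.card = q0 at *
    generalize A.card = p at *
    generalize B.card = q at *
    rcases Nat.lt_or_ge q0 q with hlt | hge
    · obtain ⟨t, rfl⟩ := Nat.exists_eq_add_of_lt hlt
      nlinarith [Nat.zero_le (p0 * t), Nat.mul_le_mul_right q0 hA]
    · obtain rfl : q0 = q := le_antisymm hq hge
      obtain ⟨x, rfl⟩ := Nat.exists_eq_add_of_le hA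
      obtain ⟨y, rfl⟩ := Nat.exists_eq_add_of_le hB
      nlinarith [Nat.zero_le (x * y)]
  have : (A.card + B.card) * D = A.card * D + B.card * D := by ring
  omega

def Cov (F : Finset (α × β)) (A : Finset α) (B : Finset β) : Prop :=
  ∀ e ∈ F, e.1 ∈ A ∨ e.2 ∈ B

def MinCov (F : Finset (α × β)) (A : Finset α) (B : Finset β) : Prop :=
  Cov F A B ∧ ∀ A' B', Cov F A' B' → A.card + B.card ≤ A'.card + B'.card

theorem Cov.swap {F : Finset (α × β)} {A : Finset α} {B : Finset β} :
    Cov (swF F) B A ↔ Cov F A B := by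
  constructor
  · rintro h ⟨a, b⟩ he
    exact (h (b, a) ((mem_swF F a b).2 he)).symm
  · rintro h ⟨b, a⟩ he
    exact (h (a, b) ((mem_swF F a b).1 he)).symm

theorem MinCov.swap {F : Finset (α × β)} {A : Finset α} {B : Finset β} (h : MinCov F A B) :
    MinCov (swF F) B A := by
  refine ⟨Cov.swap.2 h.1, fun B' A' h' => ?_⟩
  have := h.2 A' B' (Cov.swap.1 h')
  omega

theorem exists_minCov (F : Finset (α × β)) : ∃ A B, MinCov F A B := by
  obtain ⟨⟨A, B⟩, h1, h2⟩ := exists_min_image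
    ((univ : Finset (Finset α × Finset β)).filter (fun c => Cov F c.1 c.2))
    (fun c => c.1.card + c.2.card) ⟨(univ, univ), by simp [Cov]⟩
  refine ⟨A, B, by simpa using h1, fun A' B' h' => h2 (A', B') (by simpa using h')⟩

theorem MinCov.hall {F : Finset (α × β)} {A : Finset α} {B : Finset β} (h : MinCov F A B) :
    ∃ f : A → β, Function.Injective f ∧ ∀ a : A, (a.1, f a) ∈ F ∧ f a ∉ B := by
  have := (Finset.all_card_le_biUnion_card_iff_exists_injective
    (fun a : A => univ.filter (fun b => (a.1, b) ∈ F ∧ b ∉ B))).1 (by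
      intro s
      by_contra! hlt
      set U := s.biUnion (fun a : A => univ.filter (fun b => (a.1, b) ∈ F ∧ b ∉ B)) with hU
      have hc : Cov F (A \ s.image Subtype.val) (B ∪ U) := by
        rintro ⟨a, b⟩ he
        by_cases hb : b ∈ B
        · exact Or.inr (mem_union_left _ hb)
        have ha : a ∈ A := (h.1 _ he).resolve_right hb
        by_cases has : (⟨a, ha⟩ : A) ∈ s
        · right
          apply mem_union_right
          rw [hU, mem_biUnion]
          exact ⟨_, has, by simp [he, hb]⟩
        · left
          rw [mem_sdiff]
          refine ⟨ha, ?_⟩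
          simp [ha, has]
      have h1 := h.2 _ _ hc
      have h2 := card_union_le B U
      have h3 : s.image Subtype.val ⊆ A := by
        intro x hx
        rw [mem_image] at hx
        obtain ⟨y, -, rfl⟩ := hx
        exact y.2
      have h5 := card_le_card h3
      rw [card_sdiff_of_subset h3] at h1
      have h4 : (s.image Subtype.val).card = s.card :=
        card_image_of_injective _ Subtype.val_injective
      omega)
  obtain ⟨f, hf, hf'⟩ := this
  exact ⟨f, hf, fun a => by simpa using hf' a⟩

theorem MinCov.matching {F : Finset (α × β)} {A : Finset α} {B : Finset β} (h : MinCov F A B) :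
    (∀ a ∈ A, ∃ b, (a, b) ∈ F) ∧ (∀ b ∈ B, ∃ a, (a, b) ∈ F) ∧
    ∃ T ⊆ F, T.card = A.card + B.card ∧ (∀ x ∈ T, ∀ y ∈ T, x.1 = y.1 → x = y) ∧
      (∀ x ∈ T, ∀ y ∈ T, x.2 = y.2 → x = y) := by
  obtain ⟨f, hf, hf'⟩ := h.hall
  obtain ⟨g, hg, hg'⟩ := h.swap.hall
  simp only [mem_swF] at hg'
  refine ⟨fun a ha => ⟨_, (hf' ⟨a, ha⟩).1⟩, fun b hb => ⟨_, (hg' ⟨b, hb⟩).1⟩, ?_⟩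
  let T1 : Finset (α × β) := univ.image (fun a : A => (a.1, f a))
  let T2 : Finset (α × β) := univ.image (fun b : B => (g b, b.1))
  have m1 : ∀ x ∈ T1, ∃ a : A, x = (a.1, f a) := by
    intro x hx
    obtain ⟨a, -, rfl⟩ := mem_image.1 hx
    exact ⟨a, rfl⟩
  have m2 : ∀ x ∈ T2, ∃ b : B, x = (g b, b.1) := by
    intro x hx
    obtain ⟨a, -, rfl⟩ := mem_image.1 hx
    exact ⟨a, rfl⟩
  refine ⟨T1 ∪ T2, ?_, ?_, ?_, ?_⟩
  · intro x hx
    rcases mem_union.1 hx with hx | hx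
    · obtain ⟨a, rfl⟩ := m1 x hx; exact (hf' a).1
    · obtain ⟨a, rfl⟩ := m2 x hx; exact (hg' a).1
  · rw [card_union_of_disjoint, card_image_of_injective, card_image_of_injective]
    · simp
    · intro x y hxy; exact Subtype.ext (Prod.mk.inj hxy).2
    · intro x y hxy; exact Subtype.ext (Prod.mk.inj hxy).1
    · rw [disjoint_left]
      intro x h1 h2
      obtain ⟨a, rfl⟩ := m1 x h1
      obtain ⟨b, hb⟩ := m2 _ h2
      have := (Prod.mk.inj hb).2
      exact (hf' a).2 (this ▸ b.2)
  · intro x hx y hy hxy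
    rcases mem_union.1 hx with hx | hx <;> rcases mem_union.1 hy with hy | hy
    · obtain ⟨a, rfl⟩ := m1 x hx; obtain ⟨b, rfl⟩ := m1 y hy
      rw [Subtype.ext hxy]
    · obtain ⟨a, rfl⟩ := m1 x hx; obtain ⟨b, rfl⟩ := m2 y hy
      exact absurd (show g b ∈ A from (show a.1 = g b from hxy) ▸ a.2) (hg' b).2
    · obtain ⟨a, rfl⟩ := m2 x hx; obtain ⟨b, rfl⟩ := m1 y hy
      exact absurd (show g a ∈ A from (show g a = b.1 from hxy) ▸ b.2) (hg' a).2
    · obtain ⟨a, rfl⟩ := m2 x hx; obtain ⟨b, rfl⟩ := m2 y hy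
      rw [hg hxy]
  · intro x hx y hy hxy
    rcases mem_union.1 hx with hx | hx <;> rcases mem_union.1 hy with hy | hy
    · obtain ⟨a, rfl⟩ := m1 x hx; obtain ⟨b, rfl⟩ := m1 y hy
      rw [hf hxy]
    · obtain ⟨a, rfl⟩ := m1 x hx; obtain ⟨b, rfl⟩ := m2 y hy
      exact absurd (show f a ∈ B from (show f a = b.1 from hxy) ▸ b.2) (hf' a).2
    · obtain ⟨a, rfl⟩ := m2 x hx; obtain ⟨b, rfl⟩ := m1 y hy
      exact absurd (show f b ∈ B from (show a.1 = f b from hxy) ▸ a.2) (hf' b).2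
    · obtain ⟨a, rfl⟩ := m2 x hx; obtain ⟨b, rfl⟩ := m2 y hy
      rw [Subtype.ext hxy]

theorem no_C4 {E : α → β → Prop} (hc : ¬ HasCyc E 2) {a a' : α} {b b' : β} (ha : a ≠ a')
    (hb : b ≠ b') (h1 : E a b) (h2 : E a b') (h3 : E a' b) (h4 : E a' b') : False := by
  apply hc
  refine ⟨fun i => if i = 0 then a else a', fun i => if i = 0 then b else b', ?_, ?_, ?_, ?_, ?_⟩
  · intro i hi j hj h
    interval_cases i <;> interval_cases j <;> simp_all
  · intro i hi j hj h
    interval_cases i <;> interval_cases j <;> simp_all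
  · intro i hi
    interval_cases i <;> simp_all
  · intro i hi
    obtain rfl : i = 0 := by omega
    simpa using h2
  · simpa using h3

theorem BSetup.two_P {E : α → β → Prop} {F : Finset (α × β)} {D : ℕ} (h : BSetup E F D)
    (hc : ¬ HasCyc E 2) {a : α} (ha : 2 ≤ (NF F a).card) :
    (∀ e ∈ F, E a e.2) ∧ ∀ a', a' ≠ a → (NF F a').card ≤ 1 := by
  obtain ⟨b1, hb1, b2, hb2, hne⟩ := one_lt_card.1 ha
  have hb1 : (a, b1) ∈ F := by simpa [NF] using hb1
  have hb2 : (a, b2) ∈ F := by simpa [NF] using hb2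
  have h1 : ∀ e ∈ F, E a e.2 := by
    intro e he
    by_contra hn
    have ne : a ≠ e.1 := by
      rintro rfl
      exact hn (h.sub _ he)
    exact no_C4 hc ne hne (h.sub _ hb1) (h.sub _ hb2)
      ((h.strong _ he _ hb1).resolve_right hn) ((h.strong _ he _ hb2).resolve_right hn)
  refine ⟨h1, fun a' hne' => ?_⟩
  by_contra! hlt
  obtain ⟨c1, hc1, c2, hc2, hnec⟩ := one_lt_card.1 hlt
  have hc1 : (a', c1) ∈ F := by simpa [NF] using hc1
  have hc2 : (a', c2) ∈ F := by simpa [NF] using hc2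
  exact no_C4 hc hne' hnec (h.sub _ hc1) (h.sub _ hc2) (h1 _ hc1) (h1 _ hc2)

theorem BSetup.two_1 {E : α → β → Prop} {F : Finset (α × β)} {D : ℕ} (h : BSetup E F D)
    (hD : 1 ≤ D) (hc : ¬ HasCyc E 2) {a : α} (ha : 2 ≤ (NF F a).card) :
    F.card + 1 ≤ 2 * D := by
  have h1 := (h.two_P hc ha).1
  set N := univ.filter (fun b => E a b) with hN
  have hF : F.card = ∑ b ∈ N, (MF F b).card := by
    rw [← card_cols, filter_true_of_mem]
    intro e he
    simpa [hN] using h1 e he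
  have hND : N.card ≤ D := h.dr a
  by_cases hb : ∃ b, 2 ≤ (MF F b).card
  · obtain ⟨b0, hb0⟩ := hb
    have h2 : ∀ b, b ≠ b0 → (MF F b).card ≤ 1 := by
      have := (h.swap.two_P (fun hh => hc hh.swap) (a := b0) (by rwa [NF_swF])).2
      simpa only [NF_swF] using this
    have : ∑ b ∈ N, (MF F b).card ≤ ∑ b ∈ N, (1 + if b = b0 then D - 1 else 0) := by
      refine sum_le_sum fun b _ => ?_
      split_ifs with hbb
      · have := h.MF_le b; omega
      · exact h2 b hbb
    rw [sum_add_distrib, sum_ite_eq'] at this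
    have h3 : ∑ b ∈ N, 1 = N.card := by simp
    rw [h3] at this
    split_ifs at this <;> omega
  · push Not at hb
    have : ∑ b ∈ N, (MF F b).card ≤ N.card • 1 :=
      sum_le_card_nsmul _ _ _ (fun b _ => by have := hb b; omega)
    simp at this
    omega

theorem BSetup.two {E : α → β → Prop} {F : Finset (α × β)} {D : ℕ} (h : BSetup E F D)
    (hD : 1 ≤ D) (hc : ¬ HasCyc E 2) : F.card + 1 ≤ 2 * D := by
  by_cases h1 : ∃ a, 2 ≤ (NF F a).card
  · obtain ⟨a, ha⟩ := h1
    exact h.two_1 hD hc ha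
  by_cases h2 : ∃ b, 2 ≤ (MF F b).card
  · obtain ⟨b, hb⟩ := h2
    have := h.swap.two_1 hD (fun hh => hc hh.swap) (a := b) (by rwa [NF_swF])
    rwa [card_swF] at this
  push Not at h2
  have inj : ∀ e ∈ F, ∀ f ∈ F, e.2 = f.2 → e = f := by
    rintro ⟨a, b⟩ he ⟨a', b'⟩ hf hh
    obtain rfl : b = b' := hh
    by_contra hne
    have : 1 < (MF F b).card := one_lt_card.2
      ⟨a, by simpa [MF] using he, a', by simpa [MF] using hf, fun h => hne (by rw [h])⟩
    have := h2 b
    omega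
  set P := (F ×ˢ F).filter (fun x => E x.1.1 x.2.2) with hP
  set P' := (F ×ˢ F).filter (fun x => E x.2.1 x.1.2) with hP'
  have hPP : P'.card = P.card := by
    refine card_bij' (fun x _ => x.swap) (fun x _ => x.swap) ?_ ?_ ?_ ?_
    · intro x hx
      rw [hP', mem_filter, mem_product] at hx
      rw [hP, mem_filter, mem_product]
      exact ⟨⟨hx.1.2, hx.1.1⟩, hx.2⟩
    · intro x hx
      rw [hP, mem_filter, mem_product] at hx
      rw [hP', mem_filter, mem_product]
      exact ⟨⟨hx.1.2, hx.1.1⟩, hx.2⟩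
    · intro x _; rfl
    · intro x _; rfl
  have hu : P ∪ P' = F ×ˢ F := by
    rw [hP, hP', ← filter_or, filter_true_of_mem]
    intro x hx
    rw [mem_product] at hx
    exact h.strong _ hx.1 _ hx.2
  have hi : F.card ≤ (P ∩ P').card := by
    apply card_le_card_of_injOn (fun e => (e, e))
    · intro e he
      have he : e ∈ F := he
      have := h.sub e he
      simp [hP, hP', he, this]
    · intro x _ y _ hxy
      exact (Prod.mk.inj hxy).1
  have hsum : P.card ≤ F.card * D := by
    rw [card_eq_sum_card_fiberwise (f := Prod.fst) (t := F) (fun x hx => by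
      have hx : x ∈ P := hx
      rw [hP, mem_filter, mem_product] at hx
      exact hx.1.1)]
    refine sum_le_card_nsmul _ _ D (fun e he => ?_)
    refine le_trans ?_ (h.dr e.1)
    apply card_le_card_of_injOn (fun x => x.2.2)
    · intro x hx
      have hx : x ∈ P.filter (fun x => x.1 = e) := hx
      rw [mem_filter, hP, mem_filter] at hx
      have hx2 : E e.1 x.2.2 := hx.2 ▸ hx.1.2
      exact mem_coe.2 (mem_filter.2 ⟨mem_univ _, hx2⟩)
    · intro x hx y hy hxy
      have hx : x ∈ P.filter (fun x => x.1 = e) := hx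
      have hy : y ∈ P.filter (fun x => x.1 = e) := hy
      rw [mem_filter, hP, mem_filter, mem_product] at hx hy
      exact Prod.ext (hx.2.trans hy.2.symm) (inj _ hx.1.1.2 _ hy.1.1.2 hxy)
  have hc := card_union_add_card_inter P P'
  rw [hu, card_product, hPP] at hc
  rcases Nat.eq_zero_or_pos F.card with h0 | h0
  · omega
  · have : F.card * (F.card + 1) ≤ F.card * (2 * D) := by nlinarith
    exact Nat.le_of_mul_le_mul_left this h0

theorem BSetup.main {E : α → β → Prop} {F : Finset (α × β)} {D k : ℕ} (h : BSetup E F D)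
    (hD : 1 ≤ D) (hk : 2 ≤ k) (hc : ¬ HasCyc E k) : F.card + (k - 1) ≤ k * D := by
  rcases Nat.lt_or_ge D k with hlt | hkD
  · have := h.sq
    obtain ⟨t, rfl⟩ := Nat.exists_eq_add_of_lt hlt
    have : D * D + (D + t) ≤ (D + t + 1) * D := by nlinarith
    omega
  rcases Nat.eq_or_lt_of_le hk with rfl | hk3
  · exact h.two hD hc
  obtain ⟨A, B, hm⟩ := exists_minCov F
  obtain ⟨eA, eB, T, hTF, hTc, i1, i2⟩ := hm.matching
  have hcard : A.card + B.card ≤ k := by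
    by_contra! hlt
    obtain ⟨T', hT', hTc'⟩ := exists_subset_card_eq (s := T) (n := k + 1) (by omega)
    exact hc (matching_cyc T' k hk3 hTc' (fun e he => h.sub _ (hTF (hT' he)))
      (fun x hx y hy => h.strong _ (hTF (hT' hx)) _ (hTF (hT' hy)))
      (fun x hx y hy => i1 _ (hT' hx) _ (hT' hy)) (fun x hx y hy => i2 _ (hT' hx) _ (hT' hy)))
  rcases Nat.eq_or_lt_of_le hcard with heq | hlt
  · by_cases hA : A.card = 0
    · rw [card_eq_zero] at hA
      subst hA
      have := h.swap.one_sided (by omega : 1 ≤ k) hkD (fun hh => hc hh.swap) B (by simpa using heq) (by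
        rintro ⟨b, a⟩ he
        have := hm.1 _ ((mem_swF F a b).1 he)
        simpa using this)
      rwa [card_swF] at this
    by_cases hB : B.card = 0
    · rw [card_eq_zero] at hB
      subst hB
      exact h.one_sided (by omega : 1 ≤ k) hkD hc A (by simpa using heq) (by
        rintro ⟨b, a⟩ he
        have := hm.1 _ he
        simpa using this)
    have := h.mixed A B (by omega) (by omega) hm.1 eA eB
    rwa [heq] at this
  · have h1 : F.card ≤ A.card * D + B.card * D := by
      have : F = F.filter (fun e => e.1 ∈ A) ∪ F.filter (fun e => e.2 ∈ B) := by
        rw [← filter_or, filter_true_of_mem hm.1]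
      rw [this]
      refine (card_union_le _ _).trans ?_
      rw [card_rows, card_cols]
      exact Nat.add_le_add (sum_le_card_nsmul _ _ _ (fun a _ => h.NF_le a))
        (sum_le_card_nsmul _ _ _ (fun a _ => h.MF_le a))
    have h2 : A.card * D + B.card * D ≤ (k - 1) * D := by
      rw [← add_mul]; exact Nat.mul_le_mul_right _ (by omega)
    obtain ⟨t, rfl⟩ := Nat.exists_eq_add_of_le hk
    rw [show 2 + t - 1 = t + 1 by omega] at *
    nlinarith
end bip

theorem cyc_path {V : Type*} (G : SimpleGraph V) (k : ℕ) (p q : ℕ → V)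
    (hp : ∀ i < k, ∀ j < k, p i = p j → i = j) (hq : ∀ i < k, ∀ j < k, q i = q j → i = j)
    (hpq : ∀ i < k, ∀ j < k, p i ≠ q j) (h1 : ∀ i < k, G.Adj (p i) (q i))
    (h2 : ∀ i, i + 1 < k → G.Adj (p i) (q (i+1))) :
    ∀ j < k, ∃ w : G.Walk (p 0) (p j), w.IsPath ∧ w.length = 2 * j ∧
      ∀ x ∈ w.support, (∃ i ≤ j, x = p i) ∨ ∃ i, 1 ≤ i ∧ i ≤ j ∧ x = q i := by
  intro j
  induction j with
  | zero =>
    intro _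
    exact ⟨.nil, by simp, by simp, fun x hx => Or.inl ⟨0, le_rfl, by simpa using hx⟩⟩
  | succ j ih =>
    intro hj
    obtain ⟨w, hw, hl, hs⟩ := ih (by omega)
    have n1 : q (j+1) ∉ w.support := by
      intro h
      rcases hs _ h with ⟨i, hi, h⟩ | ⟨i, _, hi, h⟩
      · exact hpq _ (by omega) _ (by omega) h.symm
      · have := hq _ (by omega) _ (by omega) h; omega
    have hw1 := hw.concat n1 (h2 j hj)
    have n2 : p (j+1) ∉ (w.concat (h2 j hj)).support := by
      intro h
      rw [SimpleGraph.Walk.support_concat, List.mem_append] at h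
      rcases h with h | h
      · rcases hs _ h with ⟨i, hi, h⟩ | ⟨i, _, hi, h⟩
        · have := hp _ (by omega) _ (by omega) h; omega
        · exact hpq _ (by omega) _ (by omega) h
      · exact hpq _ (by omega) _ (by omega) (by simpa using h)
    refine ⟨_, hw1.concat n2 (h1 _ hj).symm, ?_, ?_⟩
    · rw [SimpleGraph.Walk.length_concat, SimpleGraph.Walk.length_concat, hl]; ring
    · intro x hx
      simp only [SimpleGraph.Walk.support_concat, List.mem_append,
        List.mem_singleton] at hx
      rcases hx with (hx | hx) | hx
      · rcases hs _ hx with ⟨i, hi, h⟩ | ⟨i, hi', hi, h⟩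
        · exact Or.inl ⟨i, by omega, h⟩
        · exact Or.inr ⟨i, hi', by omega, h⟩
      · exact Or.inr ⟨j+1, by omega, le_rfl, hx⟩
      · exact Or.inl ⟨j+1, le_rfl, hx⟩

theorem cyc_walk {V : Type*} (G : SimpleGraph V) (k : ℕ) (hk : 2 ≤ k) (p q : ℕ → V)
    (hp : ∀ i < k, ∀ j < k, p i = p j → i = j) (hq : ∀ i < k, ∀ j < k, q i = q j → i = j)
    (hpq : ∀ i < k, ∀ j < k, p i ≠ q j) (h1 : ∀ i < k, G.Adj (p i) (q i))
    (h2 : ∀ i, i + 1 < k → G.Adj (p i) (q (i+1))) (h3 : G.Adj (p (k-1)) (q 0)) :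
    ∃ (v : V) (c : G.Walk v v), c.IsCycle ∧ c.length = 2 * k := by
  obtain ⟨w, hw, hl, hs⟩ := cyc_path G k p q hp hq hpq h1 h2 (k-1) (by omega)
  have n0 : q 0 ∉ w.support := by
    intro h
    rcases hs _ h with ⟨i, hi, h⟩ | ⟨i, hi', hi, h⟩
    · exact hpq _ (by omega) _ (by omega) h.symm
    · have := hq _ (by omega) _ (by omega) h; omega
  refine ⟨_, .cons h3 (.cons (h1 0 (by omega)).symm w), ?_, ?_⟩
  · rw [SimpleGraph.Walk.cons_isCycle_iff, SimpleGraph.Walk.cons_isPath_iff]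
    refine ⟨⟨hw, n0⟩, ?_⟩
    rw [SimpleGraph.Walk.edges_cons, List.mem_cons]
    rintro (h | h)
    · rw [Sym2.eq_iff] at h
      rcases h with ⟨h, _⟩ | ⟨h, _⟩
      · exact hpq _ (by omega) _ (by omega) h
      · have := hp _ (by omega) _ (by omega) h; omega
    · exact n0 (w.snd_mem_support_of_mem_edges h)
  · simp [hl]; omega

theorem stmt9 {V : Type*} [Fintype V] [DecidableEq V] (G : SimpleGraph V)
    [DecidableRel G.Adj] (k : ℕ) (hk : 2 ≤ k)
    (hbip : G.Colorable 2) (hc2k : CycleFree G (2 * k))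
    (hΔ : 1 ≤ G.maxDegree)
    (S : Finset (Sym2 V)) (hS : IsStrongClique G ↑S) :
    (S.card : ℤ) ≤ k * G.maxDegree - (k - 1) := by
  classical
  obtain ⟨c⟩ := hbip
  have c01 : ∀ v, c v = 0 ∨ c v = 1 := by
    intro v
    generalize c v = x
    revert x; decide
  let E : V → V → Prop := fun a b => G.Adj a b ∧ c a = 0 ∧ c b = 1
  let F : Finset (V × V) := Finset.univ.filter (fun e => s(e.1, e.2) ∈ S ∧ c e.1 = 0 ∧ c e.2 = 1)
  have hadj : ∀ a b, s(a, b) ∈ S → G.Adj a b := fun a b h => by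
    have := hS.1 (Finset.mem_coe.2 h)
    simpa using this
  have hSF : S = F.image (fun e => s(e.1, e.2)) := by
    ext e
    induction e using Sym2.ind with
    | _ a b =>
    rw [Finset.mem_image]
    constructor
    · intro h
      have hne := c.valid (hadj a b h)
      rcases c01 a with ha | ha <;> rcases c01 b with hb | hb
      · exact absurd (ha.trans hb.symm) hne
      · exact ⟨(a, b), by simp [F, h, ha, hb], rfl⟩
      · exact ⟨(b, a), by simp [F, Sym2.eq_swap, h, ha, hb], Sym2.eq_swap⟩
      · exact absurd (ha.trans hb.symm) hne
    · rintro ⟨e, he, heq⟩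
      simp only [F, Finset.mem_filter] at he
      rw [← heq]; exact he.2.1
  have hcard : S.card ≤ F.card := by
    conv_lhs => rw [hSF]
    exact Finset.card_image_le
  have hB : BSetup E F G.maxDegree := by
    refine ⟨?_, ?_, ?_, ?_⟩
    · intro e he
      simp only [F, Finset.mem_filter] at he
      exact ⟨hadj _ _ he.2.1, he.2.2⟩
    · rintro ⟨a, b⟩ he ⟨a', b'⟩ hf
      simp only [F, Finset.mem_filter, Finset.mem_univ, true_and] at he hf
      obtain ⟨he, ha, hb⟩ := he
      obtain ⟨hf, ha', hb'⟩ := hf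
      have hab := hadj _ _ he
      have hab' := hadj _ _ hf
      obtain ⟨x, y, hx, hy, hxy⟩ := hS.2 _ he _ hf
      rw [Sym2.mem_iff] at hx hy
      simp only [E, ha, ha', hb, hb', and_true]
      have hval : ∀ u v, G.Adj u v → c u ≠ c v := fun u v h => c.valid h
      rcases hx with rfl | rfl <;> rcases hy with rfl | rfl
      · rcases hxy with rfl | hxy
        · exact Or.inl hab'
        · exact absurd (ha.trans ha'.symm) (hval _ _ hxy)
      · rcases hxy with rfl | hxy
        · rw [ha] at hb'; exact absurd hb' (by decide)
        · exact Or.inl hxy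
      · rcases hxy with rfl | hxy
        · rw [ha'] at hb; exact absurd hb (by decide)
        · exact Or.inr hxy.symm
      · rcases hxy with rfl | hxy
        · exact Or.inl hab
        · exact absurd (hb.trans hb'.symm) (hval _ _ hxy)
    · intro a
      refine le_trans (Finset.card_le_card ?_) (G.degree_le_maxDegree a)
      intro b hb
      have hb := (@Finset.mem_filter _ _ (_) _ _).1 hb
      simpa using hb.2.1
    · intro a
      refine le_trans (Finset.card_le_card ?_) (G.degree_le_maxDegree a)
      intro b hb
      have hb := (@Finset.mem_filter _ _ (_) _ _).1 hb
      simpa using hb.2.1.symm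
  have hnc : ¬ HasCyc E k := by
    rintro ⟨p, q, hp, hq, h1, h2, h3⟩
    obtain ⟨v, w, hw, hl⟩ := cyc_walk G k hk p q hp hq (by
      intro i hi j hj h
      have e1 := (h1 i hi).2.1
      have e2 := (h1 j hj).2.2
      rw [h, e2] at e1
      exact absurd e1 (by decide)) (fun i hi => (h1 i hi).1) (fun i hi => (h2 i hi).1) h3.1
    exact hc2k v w hw hl
  have := hB.main hΔ hk hnc
  have h' : S.card + (k - 1) ≤ k * G.maxDegree := by omega
  zify [show 1 ≤ k by omega] at h'
  linarith
end

section
/- Let M be a matching of a graph G that is also a strong clique of G, with |M| = m ≥ 3 and M x-special for some x ∈ V(M). Then for every ℓ ∈ {1,…,m} with ℓ ≠ 2, there exists an (x,M)-path of length ℓ in G. -/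
/-- `M` is a matching of `G`: a set of edges of `G` that are pairwise disjoint. -/
def IsMatchingSet {V : Type*} (G : SimpleGraph V) (M : Set (Sym2 V)) : Prop :=
  M ⊆ G.edgeSet ∧ ∀ e ∈ M, ∀ f ∈ M, e ≠ f → ∀ v : V, v ∈ e → v ∉ f

/-- An `(x, M)`-path: a path `P` in `G[V(M)]` starting at `x` such that the last edge of
`P` is not in `M`, and every edge of `M` with both endpoints on `P` is an edge of `P`. -/
def IsXMPath {V : Type*} (G : SimpleGraph V) (M : Finset (Sym2 V))
    {x y : V} (P : G.Walk x y) : Prop :=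
  P.IsPath ∧
    (∀ v ∈ P.support, ∃ e ∈ M, v ∈ e) ∧
    (∀ e ∈ P.edges.getLast?, e ∉ M) ∧
    (∀ e ∈ M, (∀ v ∈ e, v ∈ P.support) → e ∈ P.edges)

/-- `M` is an `x`-special matching, where `x'` is the `M`-partner of `x`: every edge
`e ≠ xx'` of `M` can be written as `e = (hd e)(tl e)` where `x` is adjacent to all heads
and to nothing else among `V(M) \ {x, x'}`, `x'` is adjacent to no head or tail, the tails
are pairwise adjacent, the heads are pairwise non-adjacent, and no head is adjacent to a
tail of a different edge. -/
def IsSpecialMatching {V : Type*} (G : SimpleGraph V) (M : Finset (Sym2 V))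
    (x x' : V) : Prop :=
  s(x, x') ∈ M ∧
    ∃ hd tl : Sym2 V → V,
      ∀ e ∈ M, e ≠ s(x, x') →
        e = s(hd e, tl e) ∧
        G.Adj x (hd e) ∧ ¬ G.Adj x (tl e) ∧
        ¬ G.Adj x' (hd e) ∧ ¬ G.Adj x' (tl e) ∧
        ∀ f ∈ M, f ≠ s(x, x') → e ≠ f →
          G.Adj (tl e) (tl f) ∧ ¬ G.Adj (hd e) (hd f) ∧ ¬ G.Adj (hd e) (tl f)

theorem tail_walk {V : Type*} (G : SimpleGraph V) (tl : Sym2 V → V) (S : Set (Sym2 V))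
    (hadj : ∀ e ∈ S, ∀ f ∈ S, e ≠ f → G.Adj (tl e) (tl f)) :
    ∀ (L : List (Sym2 V)) (e : Sym2 V), (e :: L).Nodup → (∀ f ∈ e :: L, f ∈ S) →
      ∃ (y : V) (W : G.Walk (tl e) y), W.support = (e :: L).map tl := by
  intro L
  induction L with
  | nil => intro e _ _; exact ⟨tl e, SimpleGraph.Walk.nil, by simp⟩
  | cons f L ih =>
    intro e hnd hS
    obtain ⟨y, W, hW⟩ := ih f (List.nodup_cons.1 hnd).2
      (fun g hg => hS g (List.mem_cons_of_mem _ hg))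
    have hne : e ≠ f := by
      rintro rfl
      exact (List.nodup_cons.1 hnd).1 (by simp)
    refine ⟨y, SimpleGraph.Walk.cons (hadj e (hS e (by simp)) f (hS f (by simp)) hne) W, ?_⟩
    simp [SimpleGraph.Walk.support_cons, hW]

/-- Let `M` be a matching of `G` that is also a strong clique of `G`, with `|M| = m ≥ 3`,
and suppose `M` is `x`-special for some `x ∈ V(M)` (with `M`-partner `x'`). Then for every
`ℓ ∈ {1, …, m}` with `ℓ ≠ 2` there exists an `(x, M)`-path of length `ℓ` in `G`. -/
theorem stmt15 {V : Type*} [Fintype V] [DecidableEq V] (G : SimpleGraph V)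
    (M : Finset (Sym2 V))
    (hmatch : IsMatchingSet G ↑M) (hsc : IsStrongClique G ↑M)
    (m : ℕ) (hm : M.card = m) (hm3 : 3 ≤ m)
    (x x' : V) (hspecial : IsSpecialMatching G M x x') :
    ∀ ℓ : ℕ, 1 ≤ ℓ → ℓ ≤ m → ℓ ≠ 2 →
      ∃ (y : V) (P : G.Walk x y), IsXMPath G M P ∧ P.length = ℓ := by
  intro ℓ h1 hlm h2
  obtain ⟨hx, hd, tl, H⟩ := hspecial
  have K : ∀ a ∈ M, ∀ b ∈ M, ∀ v, v ∈ a → v ∈ b → a = b := by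
    intro a ha b hb v hva hvb
    by_contra hne
    exact hmatch.2 a ha b hb hne v hva hvb
  have hxx : G.Adj x x' := hmatch.1 hx
  have mh : ∀ e ∈ M, e ≠ s(x, x') → hd e ∈ e := by
    intro e he hne
    have h : hd e ∈ s(hd e, tl e) := by simp
    rwa [← (H e he hne).1] at h
  have mt : ∀ e ∈ M, e ≠ s(x, x') → tl e ∈ e := by
    intro e he hne
    have h : tl e ∈ s(hd e, tl e) := by simp
    rwa [← (H e he hne).1] at h
  have ht : ∀ e ∈ M, e ≠ s(x, x') → G.Adj (hd e) (tl e) := by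
    intro e he hne
    have h := hmatch.1 he
    rw [(H e he hne).1] at h
    exact h
  have xh : ∀ v, ∀ e ∈ M, e ≠ s(x, x') → v ∈ e → v ≠ x ∧ v ≠ x' := by
    intro v e he hne hv
    constructor
    · rintro rfl
      exact hne (K e he _ hx _ hv (by simp))
    · rintro rfl
      exact hne (K e he _ hx _ hv (by simp))
  set S := M.erase s(x, x') with hSdef
  have hcard : S.card = m - 1 := by rw [hSdef, Finset.card_erase_of_mem hx, hm]
  have hS : ∀ e ∈ S, e ∈ M ∧ e ≠ s(x, x') := by
    intro e he
    rw [hSdef, Finset.mem_erase] at he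
    exact ⟨he.2, he.1⟩
  by_cases hl1 : ℓ = 1
  · subst hl1
    obtain ⟨e, he⟩ : S.Nonempty := Finset.card_pos.1 (by omega)
    obtain ⟨heM, hne⟩ := hS e he
    have hA := (H e heM hne).2.1
    have hnM : s(x, hd e) ∉ M := fun h => by
      have h3 := K _ h _ heM (hd e) (by simp) (mh e heM hne)
      exact (xh x e heM hne (h3 ▸ by simp)).1 rfl
    refine ⟨hd e, SimpleGraph.Walk.cons hA SimpleGraph.Walk.nil, ⟨?_, ?_, ?_, ?_⟩, by simp⟩
    · simp [hA.ne]
    · intro v hv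
      simp at hv
      rcases hv with rfl | rfl
      · exact ⟨_, hx, by simp⟩
      · exact ⟨e, heM, mh e heM hne⟩
    · simpa using hnM
    · intro f hf hall
      exfalso
      by_cases hfx : f = s(x, x')
      · subst hfx
        have := hall x' (by simp)
        simp at this
        rcases this with h | h
        · exact hxx.ne h.symm
        · exact (xh _ e heM hne (mh e heM hne)).2 h.symm
      · have a1 := hall _ (mh f hf hfx)
        have a2 := hall _ (mt f hf hfx)
        have b1 := (xh _ f hf hfx (mh f hf hfx)).1
        have b2 := (xh _ f hf hfx (mt f hf hfx)).1
        simp [b1] at a1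
        simp [b2] at a2
        exact (ht f hf hfx).ne (a1.trans a2.symm)
  · have hlen : S.toList.length = m - 1 := by simp [hcard]
    obtain ⟨e, f, L, hL⟩ : ∃ e f L, S.toList.take (ℓ - 1) = e :: f :: L := by
      have hh : (S.toList.take (ℓ - 1)).length = ℓ - 1 := by
        rw [List.length_take]; omega
      match hq : S.toList.take (ℓ - 1), hh with
      | [], hh => simp at hh; omega
      | [_], hh => simp at hh; omega
      | e :: f :: L, _ => exact ⟨e, f, L, rfl⟩
    have hlenL : (e :: f :: L).length = ℓ - 1 := by
      rw [← hL, List.length_take]; omega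
    have hnd : (e :: f :: L).Nodup := by
      rw [← hL]; exact S.nodup_toList.sublist (List.take_sublist _ _)
    have hmem : ∀ g ∈ e :: f :: L, g ∈ M ∧ g ≠ s(x, x') := by
      intro g hg
      rw [← hL] at hg
      exact hS g (Finset.mem_toList.1 (List.mem_of_mem_take hg))
    obtain ⟨y, W, hW⟩ := tail_walk G tl {e | e ∈ M ∧ e ≠ s(x, x')}
      (fun a ha b hb hab => ((H a ha.1 ha.2).2.2.2.2.2 b hb.1 hb.2 hab).1)
      (f :: L) e hnd hmem
    obtain ⟨heM, hne⟩ := hmem e (by simp)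
    have hA := (H e heM hne).2.1
    have hB := ht e heM hne
    have hsup : ∀ v ∈ W.support, ∃ g ∈ e :: f :: L, tl g = v := by
      intro v hv
      rw [hW] at hv
      exact List.mem_map.1 hv
    have hxW : x ∉ W.support := by
      intro h
      obtain ⟨g, hg, hgx⟩ := hsup _ h
      obtain ⟨hgM, hgn⟩ := hmem g hg
      exact (xh _ g hgM hgn (mt g hgM hgn)).1 hgx
    have hx'W : x' ∉ W.support := by
      intro h
      obtain ⟨g, hg, hgx⟩ := hsup _ h
      obtain ⟨hgM, hgn⟩ := hmem g hg
      exact (xh _ g hgM hgn (mt g hgM hgn)).2 hgx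
    have hhW : ∀ g ∈ M, g ≠ s(x, x') → hd g ∉ W.support := by
      intro g hgM hgn h
      obtain ⟨k, hk, hkx⟩ := hsup _ h
      obtain ⟨hkM, hkn⟩ := hmem k hk
      have : k = g := K k hkM g hgM (hd g) (hkx ▸ mt k hkM hkn) (mh g hgM hgn)
      subst this
      exact (ht k hkM hkn).ne hkx.symm
    have hWp : W.support.Nodup := by
      rw [hW]
      refine List.Nodup.map_on ?_ hnd
      intro a ha b hb hab
      obtain ⟨haM, han⟩ := hmem a ha
      obtain ⟨hbM, hbn⟩ := hmem b hb
      exact K a haM b hbM (tl a) (mt a haM han) (hab ▸ mt b hbM hbn)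
    have hWe : ∀ k ∈ W.edges, k ∉ M := by
      intro k hk hkM
      induction k using Sym2.ind with
      | _ u v =>
        obtain ⟨a, ha, hau⟩ := hsup _ (W.fst_mem_support_of_mem_edges hk)
        obtain ⟨b, hb, hbv⟩ := hsup _ (W.snd_mem_support_of_mem_edges hk)
        obtain ⟨haM, han⟩ := hmem a ha
        obtain ⟨hbM, hbn⟩ := hmem b hb
        have e1 := K _ hkM a haM u (by simp) (hau ▸ mt a haM han)
        have e2 := K _ hkM b hbM v (by simp) (hbv ▸ mt b hbM hbn)
        have hadj : G.Adj u v := W.adj_of_mem_edges hk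
        apply hadj.ne
        rw [← hau, ← hbv, ← e1, ← e2]
    have hWlen : W.length + 1 = ℓ - 1 := by
      rw [← SimpleGraph.Walk.length_support, hW, List.length_map, hlenL]
    have hWne : W.edges ≠ [] := by
      intro h
      have h3 := congrArg List.length h
      rw [SimpleGraph.Walk.length_edges] at h3
      rw [List.length_nil] at h3
      simp only [List.length_cons] at hlenL
      omega
    refine ⟨y, SimpleGraph.Walk.cons hA (SimpleGraph.Walk.cons hB W),
      ⟨?_, ?_, ?_, ?_⟩, ?_⟩
    · rw [SimpleGraph.Walk.isPath_def]
      simp only [SimpleGraph.Walk.support_cons, List.nodup_cons, List.mem_cons, not_or]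
      exact ⟨⟨hA.ne, hxW⟩, hhW e heM hne, hWp⟩
    · intro v hv
      simp only [SimpleGraph.Walk.support_cons, List.mem_cons] at hv
      rcases hv with rfl | rfl | hv
      · exact ⟨_, hx, by simp⟩
      · exact ⟨e, heM, mh e heM hne⟩
      · obtain ⟨g, hg, rfl⟩ := hsup _ hv
        exact ⟨g, (hmem g hg).1, mt g (hmem g hg).1 (hmem g hg).2⟩
    · intro k hk
      simp only [SimpleGraph.Walk.edges_cons] at hk
      obtain ⟨a, l, hal⟩ := List.exists_cons_of_ne_nil hWne
      rw [hal, List.getLast?_cons_cons, List.getLast?_cons_cons, ← hal] at hk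
      exact hWe k (List.mem_of_getLast? hk)
    · intro g hgM hall
      simp only [SimpleGraph.Walk.support_cons, List.mem_cons] at hall
      by_cases hgx : g = s(x, x')
      · subst hgx
        exfalso
        rcases hall x' (by simp) with h | h | h
        · exact hxx.ne h.symm
        · exact (xh _ e heM hne (mh e heM hne)).2 h.symm
        · exact hx'W h
      · rcases hall _ (mh g hgM hgx) with h | h | h
        · exact ((xh _ g hgM hgx (mh g hgM hgx)).1 h).elim
        · have : g = e := K g hgM e heM (hd e) (h ▸ mh g hgM hgx) (mh e heM hne)
          subst this
          simp only [SimpleGraph.Walk.edges_cons, List.mem_cons]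
          exact Or.inr (Or.inl (H g hgM hgx).1)
        · exact (hhW g hgM hgx h).elim
    · simp only [SimpleGraph.Walk.length_cons]
      omega
end
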